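/- arXiv:1907.00885 — 2 statements merged into one kernel-verified Lean document; each statement's English description precedes it below -/
import Mathlib

section
/- Let d ≥ 1, r ≥ 0 and let 𝒜 = {A_1, …, A_n} be a family of n convex sets in ℝ^d such that every d+r+1 members of 𝒜 have empty intersection. Then for every k with d ≤ k ≤ d+r−1 one has f_k(𝒜) ≤ Σ_{j=k}^{d+r-1} C(j−d, k−d) · C(n−j+d−1, d). -/
/-- `fNum A k` is `f_k(𝒜)`: the number of subsets `σ` of the index set with
`|σ| = k+1` such that `⋂ i ∈ σ, A i` is nonempty. -/
noncomputable def fNum {α : Type*} {n : ℕ} (A : Fin n → Set α) (k : ℕ) : ℕ :=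
  Nat.card {σ : Finset (Fin n) // σ.card = k + 1 ∧ (⋂ i ∈ σ, A i).Nonempty}

/-- Span of degree-`b` monomial functions. -/
noncomputable def monSpan (d b : ℕ) : Submodule ℝ ((Fin (d+1) → ℝ) → ℝ) :=
  Submodule.span ℝ (Set.range fun (s : Sym (Fin (d+1)) b) => fun c : Fin (d+1) → ℝ =>
    ((s : Multiset (Fin (d+1))).map c).prod)

lemma monSpan_zero (d : ℕ) : (fun _ => (1:ℝ)) ∈ monSpan d 0 := by
  apply Submodule.subset_span
  exact ⟨Sym.nil, by simp⟩

lemma monSpan_mul_var (d b : ℕ) (l : Fin (d+1)) (f : (Fin (d+1) → ℝ) → ℝ)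
    (hf : f ∈ monSpan d b) : (fun c => c l * f c) ∈ monSpan d (b+1) := by
  unfold monSpan at hf
  induction hf using Submodule.span_induction with
  | mem x h =>
    obtain ⟨s, rfl⟩ := h
    apply Submodule.subset_span
    exact ⟨l ::ₛ s, by ext c; simp [Sym.coe_cons]⟩
  | zero =>
    convert (monSpan d (b+1)).zero_mem using 1
    ext c; simp
  | add x y _ _ hx hy =>
    convert (monSpan d (b+1)).add_mem hx hy using 1
    ext c; simp [mul_add]
  | smul a x _ hx =>
    convert (monSpan d (b+1)).smul_mem a hx using 1
    ext c; simp; ring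

lemma monSpan_mul_lin (d b : ℕ) (a : Fin (d+1) → ℝ) (f : (Fin (d+1) → ℝ) → ℝ)
    (hf : f ∈ monSpan d b) : (fun c => (∑ l, c l * a l) * f c) ∈ monSpan d (b+1) := by
  have : (fun c : Fin (d+1) → ℝ => (∑ l, c l * a l) * f c)
      = ∑ l, a l • (fun c : Fin (d+1) → ℝ => c l * f c) := by
    ext c
    simp only [Finset.sum_mul, Finset.sum_apply, Pi.smul_apply, smul_eq_mul]
    exact Finset.sum_congr rfl fun l _ => by ring
  rw [this]
  exact Submodule.sum_mem _ fun l _ => Submodule.smul_mem _ _ (monSpan_mul_var d b l f hf)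

lemma monSpan_prod (d n : ℕ) (B : Finset (Fin n)) (a : Fin n → Fin (d+1) → ℝ) :
    (fun c => ∏ x ∈ B, ∑ l, c l * a x l) ∈ monSpan d B.card := by
  classical
  induction B using Finset.induction_on with
  | empty => simpa using monSpan_zero d
  | insert x B hx ih =>
    rw [Finset.card_insert_of_notMem hx]
    simp_rw [Finset.prod_insert hx]
    exact monSpan_mul_lin d _ _ _ ih

lemma monSpan_pow (d b m : ℕ) (l : Fin (d+1)) (f : (Fin (d+1) → ℝ) → ℝ)
    (hf : f ∈ monSpan d b) : (fun c => c l ^ m * f c) ∈ monSpan d (b+m) := by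
  induction m with
  | zero => simpa using hf
  | succ m ih =>
    have := monSpan_mul_var d _ l _ ih
    simp_rw [pow_succ', mul_assoc]
    exact this

lemma monSpan_finrank (d b : ℕ) : Module.finrank ℝ (monSpan d b) ≤ (b+d).choose d := by
  refine (finrank_range_le_card _).trans ?_
  rw [Sym.card_sym_eq_choose, Fintype.card_fin]
  rw [show d + 1 + b - 1 = b + d by omega, Nat.choose_symm_add]

instance (d b : ℕ) : FiniteDimensional ℝ (monSpan d b) := by
  unfold monSpan
  exact FiniteDimensional.span_of_finite ℝ (Set.finite_range _)

open Polynomial in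
/-- Skew Bollobas theorem (polynomial method). -/
lemma skew_bollobas {n d b : ℕ} {κ : Type*} [LinearOrder κ] (S : Finset (Finset (Fin n)))
    (τ : Finset (Fin n) → Finset (Fin n)) (key : Finset (Fin n) → κ)
    (hinj : Set.InjOn key S) (hd : ∀ σ ∈ S, σ.card = d) (hsub : ∀ σ ∈ S, σ ⊆ τ σ)
    (hcard : ∀ σ ∈ S, n ≤ (τ σ).card + b)
    (hskew : ∀ σ ∈ S, ∀ σ' ∈ S, key σ < key σ' → ¬ σ ⊆ τ σ') :
    S.card ≤ (b+d).choose d := by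
  classical
  let pol : Finset (Fin n) → ℝ[X] := fun σ => ∏ a ∈ σ, (X - C ((a : ℕ) : ℝ))
  let u : Finset (Fin n) → Fin (d+1) → ℝ := fun σ l => (pol σ).coeff l
  let f : S → (Fin (d+1) → ℝ) → ℝ := fun σ c =>
    c (Fin.last d) ^ (b - (τ σ)ᶜ.card) *
      ∏ x ∈ (τ σ)ᶜ, ∑ l : Fin (d+1), c l * (((x : ℕ) : ℝ) ^ (l : ℕ))
  have hfm : ∀ σ, f σ ∈ monSpan d b := by
    intro σ
    have h1 := monSpan_prod d n (τ σ)ᶜ (fun x l => (((x : ℕ) : ℝ) ^ (l : ℕ)))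
    have h2 := monSpan_pow d _ (b - (τ σ)ᶜ.card) (Fin.last d) _ h1
    have h3 : (τ σ)ᶜ.card + (b - (τ σ)ᶜ.card) = b := by
      have := hcard σ σ.2
      rw [Finset.card_compl, Fintype.card_fin]
      omega
    rw [h3] at h2
    exact h2
  have hdeg : ∀ σ : Finset (Fin n), (pol σ).natDegree = σ.card := by
    intro σ
    simp only [pol]
    rw [Polynomial.natDegree_prod_of_monic _ _ fun a _ => Polynomial.monic_X_sub_C _]
    simp only [Polynomial.natDegree_X_sub_C, Finset.sum_const, smul_eq_mul, mul_one]
  have hmon : ∀ σ : Finset (Fin n), (pol σ).Monic := by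
    intro σ
    exact Polynomial.monic_prod_of_monic _ _ fun a _ => Polynomial.monic_X_sub_C _
  have hlast : ∀ σ ∈ S, u σ (Fin.last d) = 1 := by
    intro σ hσ
    have := (hmon σ).coeff_natDegree
    rw [hdeg, hd σ hσ] at this
    simpa [u] using this
  have hev : ∀ σ ∈ S, ∀ x : Fin n, ∑ l : Fin (d+1), u σ l * (((x : ℕ) : ℝ) ^ (l : ℕ))
      = ∏ a ∈ σ, (((x : ℕ) : ℝ) - ((a : ℕ) : ℝ)) := by
    intro σ hσ x
    have h1 : (pol σ).eval ((x : ℕ) : ℝ) = ∏ a ∈ σ, (((x : ℕ) : ℝ) - ((a : ℕ) : ℝ)) := by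
      simp [pol, Polynomial.eval_prod]
    rw [← h1, Polynomial.eval_eq_sum_range, hdeg, hd σ hσ]
    exact Fin.sum_univ_eq_sum_range (fun l => (pol σ).coeff l * ((x : ℕ) : ℝ) ^ l) (d+1)
  have hev0 : ∀ σ ∈ S, ∀ x : Fin n, (∑ l : Fin (d+1), u σ l * (((x : ℕ) : ℝ) ^ (l : ℕ)) = 0
      ↔ x ∈ σ) := by
    intro σ hσ x
    rw [hev σ hσ, Finset.prod_eq_zero_iff]
    constructor
    · rintro ⟨a, ha, h⟩
      have : (x : ℕ) = a := by exact_mod_cast sub_eq_zero.mp h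
      rwa [Fin.ext this]
    · intro h
      exact ⟨x, h, by simp⟩
  have hval : ∀ σ ∈ S, ∀ σ' : S, f σ' (u σ) = 0 ↔ ¬ σ ⊆ τ σ' := by
    intro σ hσ σ'
    simp only [f, hlast σ hσ, one_pow, one_mul, Finset.prod_eq_zero_iff]
    simp_rw [hev0 σ hσ, Finset.not_subset, Finset.mem_compl]
    exact ⟨fun ⟨a, h⟩ => ⟨a, h.2, h.1⟩, fun ⟨a, h⟩ => ⟨a, h.2, h.1⟩⟩
  have hli : LinearIndependent ℝ f := by
    rw [Fintype.linearIndependent_iff]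
    intro g hg
    by_contra! hne
    obtain ⟨i0, hi0⟩ := hne
    obtain ⟨i, hi, hmin⟩ := Finset.exists_min_image (Finset.univ.filter fun i => g i ≠ 0)
      (fun i => key i) ⟨i0, by simpa using hi0⟩
    simp only [Finset.mem_filter, Finset.mem_univ, true_and] at hi hmin
    have h := congrFun hg (u i)
    simp only [Finset.sum_apply, Pi.smul_apply, smul_eq_mul, Pi.zero_apply] at h
    rw [Finset.sum_eq_single i] at h
    · rcases mul_eq_zero.mp h with h | h
      · exact hi h
      · exact (hval i i.2 i).mp h (hsub i i.2)
    · intro j _ hj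
      by_cases hgj : g j = 0
      · simp [hgj]
      · have hle := hmin j hgj
        have hlt : key i < key j := lt_of_le_of_ne hle fun he =>
          hj (Subtype.ext (hinj j.2 i.2 he.symm))
        rw [(hval i i.2 j).mpr (hskew i i.2 j j.2 hlt), mul_zero]
    · simp
  have h1 := finrank_span_eq_card hli
  have h2 : Submodule.span ℝ (Set.range f) ≤ monSpan d b := by
    rw [Submodule.span_le]
    rintro _ ⟨σ, rfl⟩
    exact hfm σ
  have h3 := Submodule.finrank_mono h2
  rw [h1, Fintype.card_coe] at h3
  exact h3.trans (monSpan_finrank d b)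

lemma comb_bound {n d r : ℕ} (hd : 1 ≤ d) (N : Finset (Fin n) → Prop) (v : Finset (Fin n) → ℝ)
    (hdown : ∀ σ ρ, σ ⊆ ρ → N ρ → N σ)
    (hmono : ∀ σ ρ, σ ⊆ ρ → N ρ → v σ ≤ v ρ)
    (hH : ∀ ρ, N ρ → ∃ σ ⊆ ρ, σ.card ≤ d ∧ v σ = v ρ)
    (hI : ∀ σ σ', N σ → N σ' → v σ = v σ' →
      N (σ ∪ σ') ∧ v (σ ∪ σ') = v σ ∧ v (σ ∩ σ') = v σ)
    (hdim : ∀ ρ, N ρ → ρ.card ≤ d + r) (F : Finset (Finset (Fin n))) (k : ℕ)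
    (hk : d ≤ k) (hk2 : k ≤ d + r - 1)
    (hF : ∀ σ ∈ F, σ.card = k + 1 ∧ N σ) :
    F.card ≤ ∑ j ∈ Finset.Icc k (d + r - 1),
        Nat.choose (j - d) (k - d) * Nat.choose (n - j + d - 1) d := by
  classical
  let P : Finset (Fin n) → Finset (Fin n) → Prop := fun ρ σ => σ ⊆ ρ ∧ σ.card = d ∧ v σ = v ρ
  let First : Finset (Fin n) → Finset (Fin n) → Prop := fun ρ σ =>
    P ρ σ ∧ ∀ σ', P ρ σ' → toColex σ ≤ toColex σ'
  have hex : ∀ ρ, N ρ → d ≤ ρ.card → ∃ σ, First ρ σ := by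
    intro ρ hρ hc
    obtain ⟨m, hm, hmc, hmv⟩ := hH ρ hρ
    obtain ⟨σ, h1, h2, h3⟩ := Finset.exists_subsuperset_card_eq hm hmc hc
    have hP : P ρ σ := ⟨h2, h3, le_antisymm (hmono _ _ h2 hρ)
      (hmv ▸ hmono _ _ h1 (hdown _ _ h2 hρ))⟩
    obtain ⟨σ0, h0, hmin⟩ := Finset.exists_min_image (Finset.univ.filter (P ρ)) toColex
      ⟨σ, by simpa using hP⟩
    exact ⟨σ0, by simpa using h0, fun σ' h' => hmin σ' (by simpa using h')⟩
  have huni : ∀ ρ₁ ρ₂ σ, N ρ₁ → N ρ₂ → First ρ₁ σ → First ρ₂ σ →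
      N (ρ₁ ∪ ρ₂) ∧ First (ρ₁ ∪ ρ₂) σ := by
    intro ρ₁ ρ₂ σ hN₁ hN₂ h₁ h₂
    obtain ⟨hNU, hvU, -⟩ := hI ρ₁ ρ₂ hN₁ hN₂ (h₁.1.2.2.symm.trans h₂.1.2.2)
    have hvσ : v σ = v (ρ₁ ∪ ρ₂) := h₁.1.2.2.trans hvU.symm
    refine ⟨hNU, ⟨h₁.1.1.trans Finset.subset_union_left, h₁.1.2.1, hvσ⟩, ?_⟩
    intro σ' h'
    by_contra! hlt
    have hσU : σ ⊆ ρ₁ ∪ ρ₂ := h₁.1.1.trans Finset.subset_union_left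
    obtain ⟨-, -, hvm⟩ := hI σ σ' (hdown _ _ hσU hNU) (hdown _ _ h'.1 hNU)
      (hvσ.trans h'.2.2.symm)
    have hne : σ' ≠ σ := fun h => by simp [h] at hlt
    obtain ⟨j, hjσ, hj', hjmax⟩ := Finset.Colex.toColex_lt_toColex_iff_exists_forall_lt.mp hlt
    have hnsub : ¬ σ' ⊆ σ := fun h =>
      hne (Finset.eq_of_subset_of_card_le h (by rw [h₁.1.2.1, h'.2.1]))
    obtain ⟨i, hi', hiσ⟩ := Finset.not_subset.mp hnsub
    have hij := hjmax i hi' hiσ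
    let σs := insert i (σ.erase j)
    have hs1 : σs.card = d := by
      have hc : (σ.erase j).card = d - 1 := by rw [Finset.card_erase_of_mem hjσ, h₁.1.2.1]
      have : i ∉ σ.erase j := fun h => hiσ (Finset.mem_of_mem_erase h)
      rw [Finset.card_insert_of_notMem this, hc]; omega
    have hsm : σ ∩ σ' ⊆ σs := by
      intro x hx
      rw [Finset.mem_inter] at hx
      refine Finset.mem_insert_of_mem (Finset.mem_erase.mpr ⟨?_, hx.1⟩)
      rintro rfl; exact hj' hx.2
    have hslt : toColex σs < toColex σ := by
      rw [Finset.Colex.toColex_lt_toColex_iff_exists_forall_lt]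
      refine ⟨j, hjσ, ?_, ?_⟩
      · simp only [σs, Finset.mem_insert, Finset.mem_erase, not_or]
        exact ⟨hij.ne', by simp⟩
      · intro b hb hb'
        simp only [σs, Finset.mem_insert, Finset.mem_erase] at hb
        rcases hb with rfl | hb
        · exact hij
        · exact absurd hb.2 hb'
    have key : ∀ ρ, N ρ → First ρ σ → i ∈ ρ → False := by
      intro ρ hN hf hi
      have hsub : σs ⊆ ρ := by
        intro x hx
        simp only [σs, Finset.mem_insert, Finset.mem_erase] at hx
        rcases hx with rfl | hx
        · exact hi
        · exact hf.1.1 hx.2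
      have : P ρ σs := ⟨hsub, hs1, le_antisymm (hmono _ _ hsub hN) (by
        rw [← hf.1.2.2, ← hvm]; exact hmono _ _ hsm (hdown _ _ hsub hN))⟩
      exact absurd (hf.2 _ this) (not_le.mpr hslt)
    rcases Finset.mem_union.mp (h'.1 hi') with h | h
    · exact key _ hN₁ h₁ h
    · exact key _ hN₂ h₂ h
  have hself : ∀ σ, σ.card = d → First σ σ := by
    intro σ hσ
    refine ⟨⟨subset_rfl, hσ, rfl⟩, fun σ' h' => ?_⟩
    rw [Finset.eq_of_subset_of_card_le h'.1 (by rw [hσ, h'.2.1])]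
  have hτ : ∀ σ, N σ ∧ σ.card = d → ∃ τ, N τ ∧ First τ σ ∧ ∀ ρ, N ρ → First ρ σ → ρ ⊆ τ := by
    intro σ ⟨hN, hσ⟩
    obtain ⟨τ, h0, hmax⟩ := Finset.exists_max_image
      (Finset.univ.filter fun ρ => N ρ ∧ First ρ σ) Finset.card
      ⟨σ, by simpa using ⟨hN, hself σ hσ⟩⟩
    simp only [Finset.mem_filter, Finset.mem_univ, true_and] at h0 hmax
    refine ⟨τ, h0.1, h0.2, fun ρ hρ hf => ?_⟩
    have := hmax _ (huni τ ρ σ h0.1 hρ h0.2 hf)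
    rw [Finset.eq_of_subset_of_card_le Finset.subset_union_left this]
    exact Finset.subset_union_right
  choose! τ hτN hτF hτmax using hτ
  choose! fs hfs using hex
  let S := Finset.univ.filter fun σ : Finset (Fin n) => N σ ∧ σ.card = d
  have hS : ∀ σ, σ ∈ S ↔ N σ ∧ σ.card = d := fun σ => by simp [S]
  have hFS : ∀ ρ ∈ F, fs ρ ∈ S ∧ First ρ (fs ρ) := by
    intro ρ hρ
    obtain ⟨h1, h2⟩ := hF ρ hρ
    have := hfs ρ h2 (by omega)
    exact ⟨(hS _).mpr ⟨hdown _ _ this.1.1 h2, this.1.2.1⟩, this⟩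
  rw [Finset.card_eq_sum_card_fiberwise (f := fs) (t := S) (fun ρ hρ => (hFS ρ hρ).1)]
  have hfib : ∀ σ ∈ S, (F.filter fun ρ => fs ρ = σ).card ≤
      ((τ σ).card - d).choose (k + 1 - d) := by
    intro σ hσ
    have hσ' := (hS σ).mp hσ
    have hc : ((τ σ) \ σ).card = (τ σ).card - d := by
      rw [Finset.card_sdiff_of_subset (hτF σ hσ').1.1, hσ'.2]
    rw [← hc, ← Finset.card_powersetCard]
    refine Finset.card_le_card_of_injOn (fun ρ => ρ \ σ) ?_ ?_
    · intro ρ hρ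
      simp only [Finset.coe_filter, Set.mem_ofPred_eq] at hρ
      obtain ⟨h1, h2⟩ := hFS ρ hρ.1
      rw [hρ.2] at h2
      rw [Finset.mem_coe, Finset.mem_powersetCard]
      refine ⟨Finset.sdiff_subset_sdiff (hτmax σ hσ' ρ (hF ρ hρ.1).2 h2) subset_rfl, ?_⟩
      rw [Finset.card_sdiff_of_subset h2.1.1, hσ'.2, (hF ρ hρ.1).1]
    · intro ρ hρ ρ' hρ' h
      simp only [Finset.coe_filter, Set.mem_ofPred_eq] at hρ hρ'
      have h2 := (hFS ρ hρ.1).2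
      have h2' := (hFS ρ' hρ'.1).2
      rw [hρ.2] at h2
      rw [hρ'.2] at h2'
      rw [← Finset.sdiff_union_of_subset h2.1.1, ← Finset.sdiff_union_of_subset h2'.1.1]
      simp only at h
      rw [h]
  refine (Finset.sum_le_sum hfib).trans ?_
  have hstick : ∀ σ ∈ S, ((τ σ).card - d).choose (k + 1 - d) =
      ∑ j ∈ Finset.Icc k (d + r - 1),
        if j < (τ σ).card then Nat.choose (j - d) (k - d) else 0 := by
    intro σ hσ
    have hσ' := (hS σ).mp hσ
    have h1 := hdim _ (hτN σ hσ')
    generalize (τ σ).card = t at h1 ⊢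
    rw [← Finset.sum_filter]
    rcases Nat.lt_or_ge k t with hkt | hkt
    · have h2 := Nat.sum_Icc_choose (t - d - 1) (k - d)
      rw [show t - d - 1 + 1 = t - d by omega, show k - d + 1 = k + 1 - d by omega] at h2
      rw [← h2]
      refine Finset.sum_nbij' (fun m => m + d) (fun j => j - d) ?_ ?_ ?_ ?_ ?_
      · intro a ha; simp only [Finset.mem_filter, Finset.mem_Icc] at *; omega
      · intro a ha; simp only [Finset.mem_filter, Finset.mem_Icc] at *; omega
      · intro a ha; simp
      · intro a ha; simp only [Finset.mem_filter, Finset.mem_Icc] at *; omega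
      · intro a ha; simp
    · rw [Nat.choose_eq_zero_of_lt (by omega), Finset.sum_eq_zero]
      intro j hj
      simp only [Finset.mem_filter, Finset.mem_Icc] at hj
      omega
  rw [Finset.sum_congr rfl hstick, Finset.sum_comm]
  refine Finset.sum_le_sum fun j hj => ?_
  rw [← Finset.sum_filter, Finset.sum_const, smul_eq_mul, mul_comm]
  refine Nat.mul_le_mul_left _ ?_
  rw [Finset.mem_Icc] at hj
  by_cases hjn : j < n
  · have hsk := skew_bollobas (d := d) (b := n - j - 1)
      (S.filter fun σ => j < (τ σ).card) τ
      (fun σ => toLex (-(v σ), toColex σ)) ?_ ?_ ?_ ?_ ?_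
    · rwa [show n - j - 1 + d = n - j + d - 1 by omega] at hsk
    · intro a _ b _ h
      simp only [EmbeddingLike.apply_eq_iff_eq, Prod.mk.injEq] at h
      simpa using h.2
    · intro σ hσ
      exact ((hS σ).mp (Finset.mem_filter.mp hσ).1).2
    · intro σ hσ
      exact (hτF σ ((hS σ).mp (Finset.mem_filter.mp hσ).1)).1.1
    · intro σ hσ
      have := (Finset.mem_filter.mp hσ).2
      omega
    · intro σ hσ σ' hσ' hlt hsub
      have h1 := ((hS σ).mp (Finset.mem_filter.mp hσ).1)
      have h2 := ((hS σ').mp (Finset.mem_filter.mp hσ').1)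
      have hf := hτF σ' h2
      have hN := hτN σ' h2
      have hle : v σ ≤ v σ' := by
        rw [hf.1.2.2]; exact hmono _ _ hsub hN
      rw [Prod.Lex.toLex_lt_toLex] at hlt
      rcases hlt with hlt | ⟨he, hlt⟩
      · simp only at hlt; linarith
      · simp only at he hlt
        exact absurd (hf.2 σ ⟨hsub, h1.2, by rw [← hf.1.2.2]; linarith⟩) (not_le.mpr hlt)
  · rw [Finset.card_eq_zero.mpr]
    · exact Nat.zero_le _
    · rw [Finset.filter_eq_empty_iff]
      intro σ _ h
      have := Finset.card_le_univ (τ σ)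
      rw [Fintype.card_fin] at this
      omega

lemma exists_generic {n : ℕ} {T : Type} [Fintype T] (c : T → Fin n)
    (Bad : T → (Fin n → ℝ) → Prop) (δ : ℝ) (hδ : 0 < δ)
    (hbad : ∀ t s s', (∀ i, 0 ≤ s i ∧ s i ≤ δ) → (∀ i, 0 ≤ s' i ∧ s' i ≤ δ) →
      (∀ j, j ≠ c t → s j = s' j) → Bad t s → Bad t s' → s = s') :
    ∃ s : Fin n → ℝ, (∀ i, 0 ≤ s i ∧ s i ≤ δ) ∧ ∀ t, ¬ Bad t s := by
  classical
  by_contra! hcon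
  let M := Fintype.card T + 1
  let S : (Fin n → Fin M) → Fin n → ℝ := fun a i => δ * ((a i : ℕ) : ℝ) / M
  have hM : (0:ℝ) < M := by simp only [M]; positivity
  have hbox : ∀ a i, 0 ≤ S a i ∧ S a i ≤ δ := by
    intro a i
    have h1 : (((a i : ℕ)) : ℝ) ≤ M := by exact_mod_cast (a i).2.le
    refine ⟨by simp only [S]; positivity, ?_⟩
    simp only [S]
    rw [div_le_iff₀ hM]
    gcongr
  have hS : Function.Injective S := by
    intro a b h
    ext i
    have := congrFun h i
    simp only [S] at this
    field_simp at this
    exact_mod_cast this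
  choose t ht using fun a => hcon (S a) (hbox a)
  let Φ : (Fin n → Fin M) → (Σ t : T, ({j // j ≠ c t} → Fin M)) :=
    fun a => ⟨t a, fun j => a j⟩
  have hΦ : Function.Injective Φ := by
    intro a b h
    have h1 : t a = t b := congrArg Sigma.fst h
    have h2 : ∀ j, j ≠ c (t a) → a j = b j := by
      intro j hj
      have h3 : ∀ (x y : Σ t : T, ({j // j ≠ c t} → Fin M)), x = y →
          ∀ (h : j ≠ c x.1) (h' : j ≠ c y.1), x.2 ⟨j, h⟩ = y.2 ⟨j, h'⟩ := by
        rintro x y rfl _ _; rfl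
      exact h3 _ _ h hj (show j ≠ c (t b) from h1 ▸ hj)
    apply hS
    refine hbad (t a) _ _ (hbox a) (hbox b) ?_ (ht a) (h1 ▸ ht b)
    intro j hj
    simp only [S, h2 j hj]
  have hcard := Fintype.card_le_of_injective Φ hΦ
  simp only [Fintype.card_sigma, Fintype.card_fun, Fintype.card_fin, ne_eq,
    Fintype.card_subtype_compl, Fintype.card_unique, Finset.sum_const, smul_eq_mul,
    Finset.card_univ] at hcard
  obtain ⟨t0⟩ : Nonempty T := ⟨t fun _ => ⟨0, by simp [M]⟩⟩
  have hn : 0 < n := (c t0).pos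
  obtain ⟨m, rfl⟩ : ∃ m, n = m + 1 := ⟨n - 1, by omega⟩
  simp only [Nat.add_sub_cancel, pow_succ'] at hcard
  have := Nat.le_of_mul_le_mul_right hcard (by simp only [M]; positivity)
  simp only [M] at this
  omega

lemma convexOn_infDist_aux {E : Type*} [NormedAddCommGroup E] [NormedSpace ℝ E]
    {K : Set E} (hK : IsCompact K) (hc : Convex ℝ K) (hne : K.Nonempty) :
    ConvexOn ℝ Set.univ (fun x => Metric.infDist x K) := by
  refine ⟨convex_univ, fun x _ y _ a b ha hb hab => ?_⟩
  obtain ⟨p, hp, hxp⟩ := hK.exists_infDist_eq_dist hne x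
  obtain ⟨q, hq, hyq⟩ := hK.exists_infDist_eq_dist hne y
  simp only [smul_eq_mul]
  rw [hxp, hyq]
  refine (Metric.infDist_le_dist_of_mem (hc hp hq ha hb hab)).trans ?_
  rw [dist_eq_norm, dist_eq_norm, dist_eq_norm]
  calc ‖a • x + b • y - (a • p + b • q)‖ = ‖a • (x - p) + b • (y - q)‖ := by
        congr 1; module
    _ ≤ ‖a • (x - p)‖ + ‖b • (y - q)‖ := norm_add_le _ _
    _ = a * ‖x - p‖ + b * ‖y - q‖ := by
        rw [norm_smul, norm_smul, Real.norm_of_nonneg ha, Real.norm_of_nonneg hb]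

lemma exists_functions {E : Type*} [NormedAddCommGroup E] [NormedSpace ℝ E]
    [FiniteDimensional ℝ E] {n : ℕ} (A : Fin n → Set E) (hconv : ∀ i, Convex ℝ (A i)) :
    ∃ (g : Fin n → E → ℝ) (δ : ℝ), 0 < δ ∧ (∀ i, ConvexOn ℝ Set.univ (g i)) ∧
      (∀ i, Continuous (g i)) ∧
      (∀ σ : Finset (Fin n), (⋂ i ∈ σ, A i).Nonempty → ∃ x, ∀ i ∈ σ, g i x ≤ 0) ∧
      (∀ σ : Finset (Fin n), ¬ (⋂ i ∈ σ, A i).Nonempty → ∀ x, ∃ i ∈ σ, δ < g i x) := by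
  classical
  have : ProperSpace E := FiniteDimensional.proper ℝ E
  let N : Finset (Fin n) → Prop := fun σ => (⋂ i ∈ σ, A i).Nonempty
  have hp : ∀ σ, N σ → ∃ x, ∀ i ∈ σ, x ∈ A i := by
    rintro σ ⟨x, hx⟩
    exact ⟨x, by simpa using hx⟩
  choose! p hpA using hp
  let K : Fin n → Set E := fun i => convexHull ℝ (p '' {ρ | N ρ ∧ i ∈ ρ})
  have hKc : ∀ i, IsCompact (K i) := fun i => (Set.toFinite _).isCompact_convexHull ℝ
  have hKv : ∀ i, Convex ℝ (K i) := fun i => convex_convexHull ℝ _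
  have hKA : ∀ i, K i ⊆ A i := by
    intro i
    refine convexHull_min ?_ (hconv i)
    rintro _ ⟨ρ, ⟨h1, h2⟩, rfl⟩
    exact hpA ρ h1 i h2
  have hpK : ∀ ρ, N ρ → ∀ i ∈ ρ, p ρ ∈ K i := fun ρ h i hi =>
    subset_convexHull ℝ _ ⟨ρ, ⟨h, hi⟩, rfl⟩
  let g : Fin n → E → ℝ := fun i x => if (K i).Nonempty then Metric.infDist x (K i) else 1
  have hg1 : ∀ i, (K i).Nonempty → g i = fun x => Metric.infDist x (K i) := by
    intro i h; ext x; simp [g, h]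
  have hg2 : ∀ i, ¬ (K i).Nonempty → g i = fun x => 1 := by
    intro i h; ext x; simp [g, h]
  have hgc : ∀ i, Continuous (g i) := by
    intro i
    by_cases h : (K i).Nonempty
    · rw [hg1 i h]; exact Metric.continuous_infDist_pt _
    · rw [hg2 i h]; exact continuous_const
  have hgv : ∀ i, ConvexOn ℝ Set.univ (g i) := by
    intro i
    by_cases h : (K i).Nonempty
    · rw [hg1 i h]; exact convexOn_infDist_aux (hKc i) (hKv i) h
    · rw [hg2 i h]; exact convexOn_const _ convex_univ
  have hneg : ∀ σ : Finset (Fin n), ∃ δ : ℝ, 0 < δ ∧ (¬ N σ → ∀ x, ∃ i ∈ σ, δ < g i x) := by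
    intro σ
    by_cases hN : N σ
    · exact ⟨1, one_pos, fun h => absurd hN h⟩
    by_cases hemp : ∃ i ∈ σ, ¬ (K i).Nonempty
    · obtain ⟨i, hi, h⟩ := hemp
      refine ⟨1/2, by norm_num, fun _ x => ⟨i, hi, ?_⟩⟩
      rw [hg2 i h]; norm_num
    push Not at hemp
    obtain ⟨i0, hi0⟩ : σ.Nonempty := by
      rw [Finset.nonempty_iff_ne_empty]
      rintro rfl
      exact hN ⟨0, by simp⟩
    have hZ : IsCompact (Metric.cthickening 1 (K i0)) := (hKc i0).cthickening
    have hZne : (Metric.cthickening 1 (K i0)).Nonempty :=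
      (hemp i0 hi0).mono (Metric.self_subset_cthickening _)
    have hg0 : ∀ i x, 0 ≤ g i x := by
      intro i x
      simp only [g]
      split_ifs
      · exact Metric.infDist_nonneg
      · exact zero_le_one
    obtain ⟨z, hz, hmin⟩ := hZ.exists_isMinOn hZne
      (f := fun x => ∑ i ∈ σ, g i x) (continuous_finsetSum σ fun i _ => hgc i).continuousOn
    have hpos : 0 < ∑ i ∈ σ, g i z := by
      refine lt_of_le_of_ne (Finset.sum_nonneg fun i _ => hg0 i z) fun h0 => hN ?_
      have h1 := (Finset.sum_eq_zero_iff_of_nonneg fun i _ => hg0 i z).mp h0.symm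
      refine ⟨z, ?_⟩
      simp only [Set.mem_iInter]
      intro i hi
      apply hKA
      have h2 := h1 i hi
      rw [hg1 i (hemp i hi)] at h2
      exact ((hKc i).isClosed.mem_iff_infDist_zero (hemp i hi)).mpr h2
    refine ⟨min (1/2) ((∑ i ∈ σ, g i z) / (σ.card + 1)), by positivity, fun _ x => ?_⟩
    by_contra! hle
    have hxZ : x ∈ Metric.cthickening 1 (K i0) := by
      have h1 := (hle i0 hi0).trans (min_le_left _ _)
      rw [hg1 i0 (hemp i0 hi0)] at h1
      obtain ⟨q, hq, hxq⟩ := (hKc i0).exists_infDist_eq_dist (hemp i0 hi0) x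
      refine Metric.mem_cthickening_of_dist_le x q 1 _ hq ?_
      simp only at h1
      linarith
    have h1 : ∑ i ∈ σ, g i z ≤ ∑ i ∈ σ, g i x := hmin hxZ
    have h2 : ∑ i ∈ σ, g i x ≤ ∑ i ∈ σ, (∑ i ∈ σ, g i z) / (σ.card + 1) :=
      Finset.sum_le_sum fun i hi => (hle i hi).trans (min_le_right _ _)
    rw [Finset.sum_const, nsmul_eq_mul] at h2
    have h3 : (σ.card : ℝ) * ((∑ i ∈ σ, g i z) / (σ.card + 1)) < ∑ i ∈ σ, g i z := by
      rw [mul_div_assoc', div_lt_iff₀ (by positivity)]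
      nlinarith
    linarith
  choose δ hδ hδ2 using hneg
  obtain ⟨σ0, -, hσ0⟩ := Finset.exists_min_image (Finset.univ : Finset (Finset (Fin n))) δ
    Finset.univ_nonempty
  refine ⟨g, δ σ0, hδ σ0, hgv, hgc, ?_, ?_⟩
  · intro σ hσ
    refine ⟨p σ, fun i hi => ?_⟩
    have h1 := hpK σ hσ i hi
    rw [hg1 i ⟨_, h1⟩]
    exact (Metric.infDist_zero_of_mem h1).le
  · intro σ hσ x
    obtain ⟨i, hi, h⟩ := hδ2 σ hσ x
    exact ⟨i, hi, (hσ0 σ (Finset.mem_univ _)).trans_lt h⟩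

/-- The sublevel intersections. -/
def cellSet {E : Type*} {n : ℕ} (g : Fin n → E → ℝ) (s : Fin n → ℝ) (σ : Finset (Fin n)) : Set E :=
  {x | ∀ i ∈ σ, g i x ≤ s i}

lemma cellSet_anti {E : Type*} {n : ℕ} (g : Fin n → E → ℝ) (s : Fin n → ℝ)
    {σ ρ : Finset (Fin n)} (h : σ ⊆ ρ) : cellSet g s ρ ⊆ cellSet g s σ :=
  fun _ hx i hi => hx i (h hi)

lemma cellSet_convex {E : Type*} [AddCommGroup E] [Module ℝ E] {n : ℕ} (g : Fin n → E → ℝ)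
    (hg : ∀ i, ConvexOn ℝ Set.univ (g i)) (s : Fin n → ℝ)
    (σ : Finset (Fin n)) : Convex ℝ (cellSet g s σ) := by
  intro x hx y hy a b ha hb hab i hi
  have h1 := (hg i).2 (Set.mem_univ x) (Set.mem_univ y) ha hb hab
  simp only [smul_eq_mul] at h1
  have h2 := hx i hi
  have h3 := hy i hi
  calc _ ≤ a * g i x + b * g i y := h1
    _ ≤ a * s i + b * s i := by gcongr
    _ = s i := by rw [← add_mul, hab, one_mul]

/-- Distance from the origin. -/
noncomputable def cellVal {E : Type*} [NormedAddCommGroup E] {n : ℕ} (g : Fin n → E → ℝ)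
    (s : Fin n → ℝ) (σ : Finset (Fin n)) : ℝ := Metric.infDist 0 (cellSet g s σ)

lemma cellVal_le {E : Type*} [NormedAddCommGroup E] {n : ℕ} (g : Fin n → E → ℝ)
    (s : Fin n → ℝ) (σ : Finset (Fin n)) {x : E} (hx : x ∈ cellSet g s σ) :
    cellVal g s σ ≤ ‖x‖ := by
  have := Metric.infDist_le_dist_of_mem (x := (0:E)) hx
  rwa [dist_zero_left] at this

lemma cellVal_exists {E : Type*} [NormedAddCommGroup E] [ProperSpace E] {n : ℕ}
    (g : Fin n → E → ℝ) (hg : ∀ i, Continuous (g i))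
    (s : Fin n → ℝ) (σ : Finset (Fin n)) (hne : (cellSet g s σ).Nonempty) :
    ∃ x ∈ cellSet g s σ, ‖x‖ = cellVal g s σ := by
  have hcl : IsClosed (cellSet g s σ) := by
    have : cellSet g s σ = ⋂ i ∈ σ, {x | g i x ≤ s i} := by ext x; simp [cellSet]
    rw [this]
    exact isClosed_biInter fun i _ => isClosed_le (hg i) continuous_const
  obtain ⟨x, hx, h⟩ := hcl.exists_infDist_eq_dist hne 0
  exact ⟨x, hx, by rw [cellVal, h, dist_zero_left]⟩

lemma exists_generic_cells {E : Type*} [NormedAddCommGroup E] [NormedSpace ℝ E] [ProperSpace E]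
    {n : ℕ} (g : Fin n → E → ℝ)
    (hv : ∀ i, ConvexOn ℝ Set.univ (g i)) (hg : ∀ i, Continuous (g i)) (δ : ℝ) (hδ : 0 < δ)
    (N : Finset (Fin n) → Prop)
    (hN : ∀ s : Fin n → ℝ, (∀ i, 0 ≤ s i ∧ s i ≤ δ) → ∀ σ, N σ → (cellSet g s σ).Nonempty) :
    ∃ s : Fin n → ℝ, (∀ i, 0 ≤ s i ∧ s i ≤ δ) ∧ ∀ σ σ' i, N σ → i ∈ σ → i ∉ σ' →
      cellVal g s σ = cellVal g s σ' → cellVal g s (σ.erase i) = cellVal g s σ := by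
  classical
  have hmain := exists_generic (T := Finset (Fin n) × Finset (Fin n) × Fin n)
    (fun t => t.2.2)
    (fun t s => N t.1 ∧ t.2.2 ∈ t.1 ∧ t.2.2 ∉ t.2.1 ∧
      cellVal g s t.1 = cellVal g s t.2.1 ∧ cellVal g s (t.1.erase t.2.2) ≠ cellVal g s t.1)
    δ hδ ?_
  · obtain ⟨s, hs, h⟩ := hmain
    refine ⟨s, hs, fun σ σ' i h1 h2 h3 h4 => ?_⟩
    by_contra h5
    exact h (σ, σ', i) ⟨h1, h2, h3, h4, h5⟩
  · rintro ⟨σ, σ', i⟩ s s' hs hs' hag ⟨hNσ, hi, hi', he, hne⟩ ⟨-, -, -, he', hne'⟩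
    simp only at hag hNσ hi hi' he hne he' hne'
    have hcong : ∀ ρ : Finset (Fin n), i ∉ ρ → cellSet g s ρ = cellSet g s' ρ := by
      intro ρ hρ
      ext x
      refine forall₂_congr fun j hj => ?_
      rw [hag j (by rintro rfl; exact hρ hj)]
    have hv1 : cellVal g s σ' = cellVal g s' σ' := by rw [cellVal, cellVal, hcong σ' hi']
    have hv2 : cellVal g s (σ.erase i) = cellVal g s' (σ.erase i) := by
      rw [cellVal, cellVal, hcong _ (Finset.notMem_erase i σ)]
    have hsi : s i = s' i := by
      have aux : ∀ s s' : Fin n → ℝ, (∀ i, 0 ≤ s i ∧ s i ≤ δ) →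
          (cellSet g s (σ.erase i) = cellSet g s' (σ.erase i)) →
          cellVal g s σ = cellVal g s' σ → cellVal g s (σ.erase i) ≠ cellVal g s σ →
          ¬ s i < s' i := by
        intro s s' hs hC hval hne hlt
        have hsub : cellSet g s σ ⊆ cellSet g s (σ.erase i) :=
          cellSet_anti g s (Finset.erase_subset i σ)
        obtain ⟨x, hx, hxn⟩ := cellVal_exists g hg s σ (hN s hs σ hNσ)
        obtain ⟨y, hy, hyn⟩ := cellVal_exists g hg s (σ.erase i) ⟨x, hsub hx⟩
        have hlt2 : ‖y‖ < ‖x‖ := by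
          rw [hyn, hxn]
          exact lt_of_le_of_ne (by rw [← hxn]; exact cellVal_le g s _ (hsub hx)) hne
        have hgx : g i x < s' i := (hx i hi).trans_lt hlt
        obtain ⟨l, hl0, hl1, hl⟩ : ∃ l : ℝ, 0 < l ∧ l ≤ 1 ∧
            (1 - l) * g i x + l * g i y ≤ s' i := by
          by_cases hgy : g i y ≤ s' i
          · exact ⟨1, one_pos, le_rfl, by linarith⟩
          · push Not at hgy
            have hpos : 0 < g i y - g i x := by linarith
            refine ⟨(s' i - g i x) / (g i y - g i x), div_pos (by linarith) hpos,
              (div_le_one hpos).mpr (by linarith), ?_⟩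
            have : (s' i - g i x) / (g i y - g i x) * (g i y - g i x) = s' i - g i x :=
              div_mul_cancel₀ _ hpos.ne'
            linarith
        have hz : (1 - l) • x + l • y ∈ cellSet g s' σ := by
          intro j hj
          by_cases hji : j = i
          · subst hji
            have := (hv j).2 (Set.mem_univ x) (Set.mem_univ y) (sub_nonneg.mpr hl1) hl0.le
              (sub_add_cancel 1 l)
            simp only [smul_eq_mul] at this
            exact this.trans hl
          · have := cellSet_convex g hv s (σ.erase i) (hsub hx) hy (sub_nonneg.mpr hl1) hl0.le
              (sub_add_cancel 1 l)
            rw [hC] at this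
            exact this j (Finset.mem_erase.mpr ⟨hji, hj⟩)
        have h1 := cellVal_le g s' σ hz
        have h2 : ‖(1 - l) • x + l • y‖ ≤ (1 - l) * ‖x‖ + l * ‖y‖ := by
          refine (norm_add_le _ _).trans ?_
          rw [norm_smul, norm_smul, Real.norm_of_nonneg (sub_nonneg.mpr hl1),
            Real.norm_of_nonneg hl0.le]
        rw [← hval, ← hxn] at h1
        nlinarith
      have hc := hcong _ (Finset.notMem_erase i σ)
      have hvv : cellVal g s σ = cellVal g s' σ := by rw [he, he', hv1]
      exact le_antisymm (not_lt.mp (aux s' s hs' hc.symm hvv.symm hne'))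
        (not_lt.mp (aux s s' hs hc hvv hne))
    ext j
    by_cases hj : j = i
    · rw [hj, hsi]
    · exact hag j hj

theorem upper_bound_theorem_convex (d r n : ℕ) (hd : 1 ≤ d)
    (A : Fin n → Set (EuclideanSpace ℝ (Fin d)))
    (hconv : ∀ i, Convex ℝ (A i))
    (hempty : ∀ σ : Finset (Fin n), σ.card = d + r + 1 → (⋂ i ∈ σ, A i) = ∅) :
    ∀ k, d ≤ k → k ≤ d + r - 1 →
      fNum A k ≤ ∑ j ∈ Finset.Icc k (d + r - 1),
        Nat.choose (j - d) (k - d) * Nat.choose (n - j + d - 1) d := by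
  classical
  intro k hk hk2
  obtain ⟨g, δ, hδ, hv, hg, hpos, hneg⟩ := exists_functions A hconv
  let N : Finset (Fin n) → Prop := fun σ => (⋂ i ∈ σ, A i).Nonempty
  have hNs : ∀ s : Fin n → ℝ, (∀ i, 0 ≤ s i ∧ s i ≤ δ) → ∀ σ, N σ →
      (cellSet g s σ).Nonempty := by
    intro s hs σ hσ
    obtain ⟨x, hx⟩ := hpos σ hσ
    exact ⟨x, fun i hi => (hx i hi).trans (hs i).1⟩
  obtain ⟨s, hs, hgen⟩ := exists_generic_cells g hv hg δ hδ N hNs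
  have hne : ∀ σ, N σ → (cellSet g s σ).Nonempty := hNs s hs
  have hNof : ∀ σ, (cellSet g s σ).Nonempty → N σ := by
    rintro σ ⟨x, hx⟩
    by_contra h
    obtain ⟨i, hi, hlt⟩ := hneg σ h x
    exact absurd ((hx i hi).trans (hs i).2) (not_le.mpr hlt)
  have hdown : ∀ σ ρ, σ ⊆ ρ → N ρ → N σ := fun σ ρ h hρ =>
    hNof σ ((hne ρ hρ).mono (cellSet_anti g s h))
  have hmono : ∀ σ ρ, σ ⊆ ρ → N ρ → cellVal g s σ ≤ cellVal g s ρ := by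
    intro σ ρ h hρ
    obtain ⟨x, hx, hxn⟩ := cellVal_exists g hg s ρ (hne ρ hρ)
    rw [← hxn]
    exact cellVal_le g s σ (cellSet_anti g s h hx)
  have hinter : ∀ m : ℕ, ∀ σ σ', (σ \ σ').card = m → N σ → cellVal g s σ = cellVal g s σ' →
      cellVal g s (σ ∩ σ') = cellVal g s σ := by
    intro m
    induction m with
    | zero =>
      intro σ σ' hc _ _
      rw [Finset.card_eq_zero, Finset.sdiff_eq_empty_iff_subset] at hc
      rw [Finset.inter_eq_left.mpr hc]
    | succ m ih =>
      intro σ σ' hc hN he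
      obtain ⟨i, hi⟩ : (σ \ σ').Nonempty := by
        rw [← Finset.card_pos]; omega
      have hi' := Finset.mem_sdiff.mp hi
      have h1 := hgen σ σ' i hN hi'.1 hi'.2 he
      have h2 := ih (σ.erase i) σ' (by
        rw [Finset.erase_sdiff_comm, Finset.card_erase_of_mem hi, hc]; rfl)
        (hdown _ _ (Finset.erase_subset _ _) hN) (h1.trans he)
      rw [Finset.erase_inter, Finset.erase_eq_of_notMem (by simp [hi'.2])] at h2
      exact h2.trans h1
  have hI : ∀ σ σ', N σ → N σ' → cellVal g s σ = cellVal g s σ' →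
      N (σ ∪ σ') ∧ cellVal g s (σ ∪ σ') = cellVal g s σ ∧
        cellVal g s (σ ∩ σ') = cellVal g s σ := by
    intro σ σ' h1 h2 he
    have h3 := hinter _ σ σ' rfl h1 he
    obtain ⟨x, hx, hxn⟩ := cellVal_exists g hg s σ (hne σ h1)
    obtain ⟨y, hy, hyn⟩ := cellVal_exists g hg s σ' (hne σ' h2)
    have hxy : x = y := by
      by_contra hxy
      have hn : ‖x‖ = ‖y‖ := by rw [hxn, hyn, he]
      have hlt := (norm_midpoint_lt_iff hn).mpr hxy
      have hmem : (1 / 2 : ℝ) • (x + y) ∈ cellSet g s (σ ∩ σ') := by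
        rw [smul_add]
        exact cellSet_convex g hv s _ (cellSet_anti g s Finset.inter_subset_left hx)
          (cellSet_anti g s Finset.inter_subset_right hy) (by norm_num) (by norm_num) (by norm_num)
      have := cellVal_le g s _ hmem
      rw [h3, ← hxn] at this
      linarith
    subst hxy
    have hxu : x ∈ cellSet g s (σ ∪ σ') := by
      intro i hi
      rcases Finset.mem_union.mp hi with h | h
      · exact hx i h
      · exact hy i h
    have hNU := hNof _ ⟨x, hxu⟩
    refine ⟨hNU, le_antisymm ?_ (hmono _ _ Finset.subset_union_left hNU), h3⟩
    rw [← hxn]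
    exact cellVal_le g s _ hxu
  have hH : ∀ ρ, N ρ → ∃ σ ⊆ ρ, σ.card ≤ d ∧ cellVal g s σ = cellVal g s ρ := by
    intro ρ hρ
    by_contra! hcon
    let F : Option (Fin n) → Set (EuclideanSpace ℝ (Fin d)) := fun o =>
      o.elim (Metric.ball 0 (cellVal g s ρ)) (fun i => cellSet g s {i})
    have hell := Convex.helly_theorem' (𝕜 := ℝ) (F := F) (s := Finset.insertNone ρ) ?_ ?_
    · obtain ⟨x, hx⟩ := hell
      simp only [Set.mem_iInter] at hx
      have h1 := hx none (by simp)
      have h2 : x ∈ cellSet g s ρ := by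
        intro i hi
        exact hx (some i) (by simpa using hi) i (by simp)
      have h3 := cellVal_le g s ρ h2
      have h4 : ‖x‖ < cellVal g s ρ := by simpa [F] using h1
      linarith
    · rintro (_ | i) _
      · exact convex_ball _ _
      · exact cellSet_convex g hv s _
    · intro I hIs hIc
      rw [finrank_euclideanSpace_fin] at hIc
      have hsub : Finset.eraseNone I ⊆ ρ := by
        intro i hi
        rw [Finset.mem_eraseNone] at hi
        simpa using hIs hi
      by_cases hnone : none ∈ I
      · have hc : (Finset.eraseNone I).card ≤ d := by
          have h5 : (I.erase none).card = I.card - 1 := Finset.card_erase_of_mem hnone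
          have h6 : (Finset.eraseNone I).card ≤ (I.erase none).card := by
            refine Finset.card_le_card_of_injOn some ?_ (Option.some_injective _).injOn
            intro i hi
            have : some i ∈ I := by simpa using hi
            simpa using this
          omega
        have hlt := lt_of_le_of_ne (hmono _ _ hsub hρ) (hcon _ hsub hc)
        obtain ⟨x, hx, hxn⟩ := cellVal_exists g hg s _ (hne _ (hdown _ _ hsub hρ))
        refine ⟨x, ?_⟩
        simp only [Set.mem_iInter]
        rintro (_ | i) ho
        · simpa [F, hxn] using hlt
        · intro j hj
          rw [Finset.mem_singleton] at hj
          subst hj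
          exact hx j (by simpa using ho)
      · obtain ⟨x, hx⟩ := hne ρ hρ
        refine ⟨x, ?_⟩
        simp only [Set.mem_iInter]
        rintro (_ | i) ho
        · exact absurd ho hnone
        · intro j hj
          rw [Finset.mem_singleton] at hj
          subst hj
          exact hx j (hsub (by simpa using ho))
  have hdim : ∀ ρ, N ρ → ρ.card ≤ d + r := by
    intro ρ hρ
    by_contra! hlt
    obtain ⟨σ, hσ, hc⟩ := Finset.exists_subset_card_eq (show d + r + 1 ≤ ρ.card by omega)
    have h1 : (⋂ i ∈ σ, A i).Nonempty := hdown _ _ hσ hρ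
    rw [hempty σ hc] at h1
    exact Set.not_nonempty_empty h1
  have hfin := comb_bound hd N (cellVal g s) hdown hmono hH hI hdim
    (Finset.univ.filter fun σ => σ.card = k + 1 ∧ N σ) k hk hk2 (by simp)
  have hcard : fNum A k = (Finset.univ.filter fun σ => σ.card = k + 1 ∧ N σ).card := by
    rw [fNum, Nat.card_eq_fintype_card, Fintype.card_subtype]
  rw [hcard]
  exact hfin
end

section
/- Let k ≥ 2 be an integer and let 𝒜 = {A_1, …, A_n} be a finite family of subsets of ℝ² satisfying: (i) f_{k+1}(𝒜) = 0, and (ii) for every σ ⊆ {1, …, n} with |σ| ∈ {k, k+1}, the set A_σ is empty, or a single point, or both open and path-connected. Then f_k(𝒜) ≤ ((4k+1)/(4k²−7k+1)) · f^{ind}_{k-1}(𝒜). -/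
/-- `fInd A k` is `f_k^{ind}(𝒜)`: the number of subsets `τ` with `|τ| = k+1` and
`⋂ i ∈ τ, A i ≠ ∅` for which there is `σ ⊃ τ` with `|σ| = k+2` and `⋂ i ∈ σ, A i ≠ ∅`. -/
noncomputable def fInd {α : Type*} {n : ℕ} (A : Fin n → Set α) (k : ℕ) : ℕ :=
  Nat.card {τ : Finset (Fin n) // τ.card = k + 1 ∧ (⋂ i ∈ τ, A i).Nonempty ∧
    ∃ σ : Finset (Fin n), τ ⊂ σ ∧ σ.card = k + 2 ∧ (⋂ i ∈ σ, A i).Nonempty}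

namespace PUB
open scoped Classical

/-- mod 2 boundary of a 1-chain in a multigraph -/
noncomputable def bd {V E : Type} [Fintype E] (s t : E → V) (z : E → ZMod 2) (v : V) : ZMod 2 :=
  ∑ e, z e * ((if s e = v then 1 else 0) + (if t e = v then 1 else 0))

/-- an abstract dual: the cycle space is the cut space of another multigraph -/
def HasDual {V E : Type} [Fintype E] (s t : E → V) : Prop :=
  ∃ (F : Type) (_ : Finite F) (a b : E → F), ∀ z : E → ZMod 2,
    (∀ v, bd s t z v = 0) ↔ ∃ c : F → ZMod 2, ∀ e, z e = c (a e) + c (b e)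

theorem exists_other {V E : Type} [Fintype E] {s t : E → V} (hne : ∀ e, s e ≠ t e)
    {z : E → ZMod 2} {v : V} (hv : bd s t z v = 0) {e : E} (he : z e ≠ 0)
    (hev : s e = v ∨ t e = v) : ∃ e', e' ≠ e ∧ z e' ≠ 0 ∧ (s e' = v ∨ t e' = v) := by
  by_contra hcon
  push Not at hcon
  unfold bd at hv
  rw [Finset.sum_eq_single e] at hv
  · have hn := hne e
    rcases hev with h | h
    · have h' : t e ≠ v := fun h' => hn (h.trans h'.symm)
      simp [h, h'] at hv
      exact he hv
    · have h' : s e ≠ v := fun h' => hn (h'.trans h.symm)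
      simp [h, h'] at hv
      exact he hv
  · intro e' _ hee
    by_cases hz : z e' = 0
    · simp [hz]
    · have := hcon e' hee hz
      simp [this.1, this.2]
  · simp

/-- support of a chain -/
noncomputable def supp {E : Type} [Fintype E] (z : E → ZMod 2) : Finset E :=
  Finset.univ.filter (fun e => z e ≠ 0)

theorem mem_supp {E : Type} [Fintype E] {z : E → ZMod 2} {e : E} : e ∈ supp z ↔ z e ≠ 0 := by
  simp [supp]

/-- the three edges of a triangle -/
def IsTri {V E : Type} (s t : E → V) (e₁ e₂ e₃ : E) : Prop :=
  ∃ x y w : V, x ≠ y ∧ x ≠ w ∧ y ≠ w ∧ s(s e₁, t e₁) = s(x, y) ∧ s(s e₂, t e₂) = s(x, w) ∧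
    s(s e₃, t e₃) = s(y, w)

theorem cycle_aux {V E : Type} [Fintype E] {s t : E → V} (hne : ∀ e, s e ≠ t e)
    (hinj : ∀ e e', s(s e, t e) = s(s e', t e') → e = e')
    {z : E → ZMod 2} (hz : ∀ v, bd s t z v = 0) (h0 : z ≠ 0) :
    ∃ e₁ e₂ e₃, e₁ ≠ e₂ ∧ e₁ ≠ e₃ ∧ e₂ ≠ e₃ ∧ z e₁ ≠ 0 ∧ z e₂ ≠ 0 ∧ z e₃ ≠ 0 ∧
      ((supp z).card = 3 → IsTri s t e₁ e₂ e₃) := by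
  obtain ⟨e, he⟩ : ∃ e, z e ≠ 0 := by
    by_contra h
    push Not at h
    exact h0 (funext h)
  obtain ⟨e2, h21, h2z, h2⟩ := exists_other hne (hz (s e)) he (Or.inl rfl)
  obtain ⟨e3, h31, h3z, h3⟩ := exists_other hne (hz (t e)) he (Or.inr rfl)
  have hm2 : s e ∈ s(s e2, t e2) := by
    rcases h2 with h | h <;> simp [← h]
  have hm3 : t e ∈ s(s e3, t e3) := by
    rcases h3 with h | h <;> simp [← h]
  obtain ⟨w, hw⟩ := Sym2.mem_iff_exists.1 hm2
  obtain ⟨u, hu⟩ := Sym2.mem_iff_exists.1 hm3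
  have hxy := hne e
  have hxw : s e ≠ w := by
    rintro rfl
    have := hne e2
    rw [Sym2.eq_iff] at hw
    rcases hw with ⟨h, h'⟩ | ⟨h, h'⟩ <;> exact this (h.trans h'.symm)
  have hyu : t e ≠ u := by
    rintro rfl
    have := hne e3
    rw [Sym2.eq_iff] at hu
    rcases hu with ⟨h, h'⟩ | ⟨h, h'⟩ <;> exact this (h.trans h'.symm)
  have hyw : t e ≠ w := by
    rintro rfl
    exact h21 (hinj _ _ hw)
  have h23 : e2 ≠ e3 := by
    rintro rfl
    have : t e ∈ s(s e, w) := by rw [← hw, hu]; simp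
    rw [Sym2.mem_iff] at this
    rcases this with h | h
    · exact hxy h.symm
    · exact hyw h
  refine ⟨e, e2, e3, h21.symm, h31.symm, h23, he, h2z, h3z, fun hc => ?_⟩
  have hS : supp z = {e, e2, e3} := by
    symm
    apply Finset.eq_of_subset_of_card_le
    · intro x hx
      simp only [Finset.mem_insert, Finset.mem_singleton] at hx
      rw [mem_supp]
      rcases hx with rfl | rfl | rfl <;> assumption
    · rw [hc, Finset.card_eq_three.2 ⟨e, e2, e3, h21.symm, h31.symm, h23, rfl⟩]
  have hwe : s e2 = w ∨ t e2 = w := by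
    have : w ∈ s(s e2, t e2) := by rw [hw]; simp
    rw [Sym2.mem_iff] at this
    rcases this with h | h <;> simp [h]
  obtain ⟨e4, h42, h4z, h4⟩ := exists_other hne (hz w) h2z hwe
  have h4S := mem_supp.2 h4z
  rw [hS] at h4S
  simp only [Finset.mem_insert, Finset.mem_singleton] at h4S
  have h43 : e4 = e3 := by
    rcases h4S with rfl | h | h
    · rcases h4 with h | h
      · exact absurd h hxw
      · exact absurd h hyw
    · exact absurd h h42
    · exact h
  subst h43
  have huw : u = w := by
    have : w ∈ s(t e, u) := by
      rw [← hu, Sym2.mem_iff]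
      rcases h4 with h | h <;> simp [h]
    rw [Sym2.mem_iff] at this
    rcases this with h | h
    · exact absurd h.symm hyw
    · exact h.symm
  subst huw
  exact ⟨s e, t e, u, hxy, hxw, hyw, rfl, hw, hu⟩

theorem three_le_supp {V E : Type} [Fintype E] {s t : E → V} (hne : ∀ e, s e ≠ t e)
    (hinj : ∀ e e', s(s e, t e) = s(s e', t e') → e = e')
    {z : E → ZMod 2} (hz : ∀ v, bd s t z v = 0) (h0 : z ≠ 0) : 3 ≤ (supp z).card := by
  obtain ⟨e1, e2, e3, h12, h13, h23, h1, h2, h3, -⟩ := cycle_aux hne hinj hz h0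
  rw [← Finset.card_eq_three.2 ⟨e1, e2, e3, h12, h13, h23, rfl⟩]
  apply Finset.card_le_card
  intro x hx
  simp only [Finset.mem_insert, Finset.mem_singleton] at hx
  rw [mem_supp]
  rcases hx with rfl | rfl | rfl <;> assumption

/-- boundary as a linear map -/
noncomputable def bdL {V E : Type} [Fintype E] (s t : E → V) :
    (E → ZMod 2) →ₗ[ZMod 2] (V → ZMod 2) where
  toFun z := bd s t z
  map_add' x y := by
    ext v; simp [bd, add_mul, Finset.sum_add_distrib]
  map_smul' c x := by
    ext v; simp [bd, Finset.mul_sum, mul_assoc]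

/-- coboundary of the dual -/
noncomputable def cob {E F : Type} (a b : E → F) : (F → ZMod 2) →ₗ[ZMod 2] (E → ZMod 2) where
  toFun c := fun e => c (a e) + c (b e)
  map_add' x y := by
    ext v; simp; ring
  map_smul' c x := by
    ext v; simp; ring

theorem finrank_range_bd {V E : Type} [Fintype V] [Fintype E] (s t : E → V) :
    Module.finrank (ZMod 2) (LinearMap.range (bdL s t)) ≤ Fintype.card V - 1 := by
  rcases isEmpty_or_nonempty V with hV | ⟨⟨v0⟩⟩
  · have := Submodule.finrank_le (LinearMap.range (bdL s t))
    simp only [Module.finrank_fintype_fun_eq_card, Fintype.card_eq_zero] at this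
    omega
  · have hle : LinearMap.range (bdL s t) ≤
        LinearMap.ker (∑ v : V, LinearMap.proj v : (V → ZMod 2) →ₗ[ZMod 2] ZMod 2) := by
      rintro _ ⟨z, rfl⟩
      rw [LinearMap.mem_ker]
      simp only [LinearMap.coe_sum, Finset.sum_apply, LinearMap.coe_proj, Function.eval,
        bdL, LinearMap.coe_mk, AddHom.coe_mk, bd]
      rw [Finset.sum_comm]
      apply Finset.sum_eq_zero
      intro e _
      rw [← Finset.mul_sum, Finset.sum_add_distrib]
      simp
      right
      decide
    have h1 := Submodule.finrank_mono hle
    have h2 := LinearMap.finrank_range_add_finrank_ker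
      (∑ v : V, LinearMap.proj v : (V → ZMod 2) →ₗ[ZMod 2] ZMod 2)
    have h3 : LinearMap.range (∑ v : V, LinearMap.proj v : (V → ZMod 2) →ₗ[ZMod 2] ZMod 2) = ⊤ := by
      rw [LinearMap.range_eq_top]
      intro x
      refine ⟨Pi.single v0 x, ?_⟩
      simp
    rw [h3] at h2
    simp only [finrank_top, Module.finrank_self, Module.finrank_fintype_fun_eq_card] at h2
    omega

theorem exists_basis {V E : Type} [Fintype V] [Fintype E] {s t : E → V} (hd : HasDual s t) :
    ∃ (κ : Type) (_ : Fintype κ) (f : κ → E → ZMod 2), LinearIndependent (ZMod 2) f ∧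
      (∀ i v, bd s t (f i) v = 0) ∧
      Fintype.card E ≤ Fintype.card κ + (Fintype.card V - 1) ∧
      ∀ e, (Finset.univ.filter (fun i => f i e ≠ 0)).card ≤ 2 := by
  obtain ⟨F, hF, a, b, hab⟩ := hd
  have := Fintype.ofFinite F
  have hker : LinearMap.ker (bdL s t) = LinearMap.range (cob a b) := by
    ext z
    rw [LinearMap.mem_ker, LinearMap.mem_range]
    have := hab z
    constructor
    · intro h
      obtain ⟨c, hc⟩ := this.1 (fun v => congrFun h v)
      exact ⟨c, funext fun e => (hc e).symm⟩
    · rintro ⟨c, hc⟩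
      exact funext (this.2 ⟨c, fun e => (congrFun hc e).symm⟩)
  let v : F → (E → ZMod 2) := fun φ => cob a b (Pi.single φ 1)
  obtain ⟨κ, g, hg, hspan, hli⟩ := exists_linearIndependent' (ZMod 2) v
  have hκ : Finite κ := Finite.of_injective g hg
  have := Fintype.ofFinite κ
  have hr : Submodule.span (ZMod 2) (Set.range v) = LinearMap.range (cob a b) := by
    rw [LinearMap.range_eq_map, ← (Pi.basisFun (ZMod 2) F).span_eq, Submodule.map_span,
      ← Set.range_comp]
    congr 1
  refine ⟨κ, this, v ∘ g, hli, ?_, ?_, ?_⟩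
  · intro i
    apply (hab _).2
    exact ⟨Pi.single (g i) 1, fun e => rfl⟩
  · have h1 := finrank_span_eq_card hli
    rw [hspan, hr, ← hker] at h1
    have h2 := LinearMap.finrank_range_add_finrank_ker (bdL s t)
    have h3 := finrank_range_bd s t
    simp only [Module.finrank_fintype_fun_eq_card] at h2
    omega
  · intro e
    have : (Finset.univ.filter (fun i => (v ∘ g) i e ≠ 0)).image g ⊆ {a e, b e} := by
      intro φ hφ
      simp only [Finset.mem_image, Finset.mem_filter, Finset.mem_univ, true_and] at hφ
      obtain ⟨i, hi, rfl⟩ := hφ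
      by_contra hcon
      simp only [Finset.mem_insert, Finset.mem_singleton, not_or] at hcon
      apply hi
      simp [v, cob, Pi.single_apply, Ne.symm hcon.1, Ne.symm hcon.2]
    have h2 := Finset.card_le_card this
    rw [Finset.card_image_of_injective _ hg] at h2
    exact h2.trans Finset.card_le_two

theorem cover_count {V E κ : Type} [Fintype E] [Fintype κ] {s t : E → V} (hne : ∀ e, s e ≠ t e)
    (hinj : ∀ e e', s(s e, t e) = s(s e', t e') → e = e')
    {f : κ → E → ZMod 2} (hli : LinearIndependent (ZMod 2) f)
    (hcyc : ∀ i v, bd s t (f i) v = 0)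
    (h2 : ∀ e, (Finset.univ.filter (fun i => f i e ≠ 0)).card ≤ 2)
    (K : Finset κ) (hK : K.Nonempty) (E' : Finset E) (hE : ∀ i ∈ K, supp (f i) ⊆ E') :
    ∑ i ∈ K, (supp (f i)).card + 3 ≤ 2 * E'.card := by
  set y : E → ZMod 2 := ∑ i ∈ K, f i with hy
  have hy0 : y ≠ 0 := by
    intro h
    obtain ⟨i, hi⟩ := hK
    have := linearIndependent_iff'.1 hli K (fun _ => 1) (by simpa [hy] using h) i hi
    exact one_ne_zero this
  have hyc : ∀ v, bd s t y v = 0 := by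
    intro v
    have : bdL s t y = 0 := by
      rw [hy, map_sum]
      apply Finset.sum_eq_zero
      intro i _
      exact funext (hcyc i)
    exact congrFun this v
  have h3 := three_le_supp hne hinj hyc hy0
  have hsub : supp y ⊆ E' := by
    intro e he
    rw [mem_supp, hy, Finset.sum_apply] at he
    obtain ⟨i, hi, hie⟩ := Finset.exists_ne_zero_of_sum_ne_zero he
    exact hE i hi (mem_supp.2 hie)
  have hcount : ∑ i ∈ K, (supp (f i)).card = ∑ e ∈ E', (K.filter (fun i => f i e ≠ 0)).card := by
    have h : ∀ i ∈ K, (supp (f i)).card = (E'.filter (fun e => f i e ≠ 0)).card := by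
      intro i hi
      congr 1
      ext e
      simp only [mem_supp, Finset.mem_filter]
      exact ⟨fun h => ⟨hE i hi (mem_supp.2 h), h⟩, fun h => h.2⟩
    rw [Finset.sum_congr rfl h]
    exact Finset.sum_card_bipartiteAbove_eq_sum_card_bipartiteBelow (fun i e => f i e ≠ 0)
  have hle : ∀ e ∈ E', (K.filter (fun i => f i e ≠ 0)).card + (if e ∈ supp y then 1 else 0) ≤ 2 := by
    intro e _
    have hc : (K.filter (fun i => f i e ≠ 0)).card ≤ 2 := by
      refine le_trans (Finset.card_le_card ?_) (h2 e)
      intro i hi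
      simp only [Finset.mem_filter, Finset.mem_univ, true_and] at hi ⊢
      exact hi.2
    split_ifs with hs
    · have hye : y e = ((K.filter (fun i => f i e ≠ 0)).card : ZMod 2) := by
        rw [hy, Finset.sum_apply, Finset.card_filter, Nat.cast_sum]
        apply Finset.sum_congr rfl
        intro i _
        generalize f i e = q
        revert q
        decide
      rw [mem_supp, hye] at hs
      have : (K.filter (fun i => f i e ≠ 0)).card ≠ 2 := by
        intro h
        rw [h] at hs
        exact hs (by decide)
      omega
    · omega
  have hsum := Finset.sum_le_sum hle
  rw [Finset.sum_add_distrib, ← hcount, Finset.sum_ite_mem, Finset.inter_eq_right.2 hsub] at hsum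
  simp at hsum
  omega

theorem planar_bound {V E : Type} [Fintype V] [Fintype E] {s t : E → V} (hne : ∀ e, s e ≠ t e)
    (hinj : ∀ e e', s(s e, t e) = s(s e', t e') → e = e') (hd : HasDual s t)
    (k : ℕ) (hk : 1 ≤ k) (hV : Fintype.card V ≤ k + 2) : Fintype.card E ≤ 3 * k := by
  obtain ⟨κ, _, f, hli, hcyc, hcard, h2⟩ := exists_basis hd
  rcases isEmpty_or_nonempty κ with hκ | hκ
  · simp only [Fintype.card_eq_zero] at hcard
    omega
  · have := cover_count hne hinj hli hcyc h2 Finset.univ Finset.univ_nonempty Finset.univ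
      (fun i _ => Finset.subset_univ _)
    have h3 : ∑ i : κ, 3 ≤ ∑ i : κ, (supp (f i)).card := Finset.sum_le_sum fun i _ =>
      three_le_supp hne hinj (hcyc i) (hli.ne_zero i)
    simp only [Finset.sum_const, Finset.card_univ, smul_eq_mul] at h3 this
    omega

theorem main_count {V E ι : Type} [Fintype V] [Fintype E] [Fintype ι] {s t : E → V}
    (hne : ∀ e, s e ≠ t e)
    (hinj : ∀ e e', s(s e, t e) = s(s e', t e') → e = e') (hd : HasDual s t)
    (lab : E → ι) (htri : ∀ e₁ e₂ e₃, IsTri s t e₁ e₂ e₃ → lab e₁ = lab e₂ ∧ lab e₁ = lab e₃)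
    (k : ℕ) (hk : 1 ≤ k)
    (hlab : ∀ u, (Finset.univ.filter (fun e => lab e = u)).card ≤ 3 * k) :
    (4 * k + 1) * Fintype.card E ≤ 12 * k * Fintype.card V := by
  obtain ⟨κ, _, f, hli, hcyc, hcard, h2⟩ := exists_basis hd
  have h3 := fun i => three_le_supp hne hinj (hcyc i) (hli.ne_zero i)
  set T := Finset.univ.filter (fun i => (supp (f i)).card = 3) with hT
  -- choose the label of a triangle
  have hex : ∀ i ∈ T, ∃ u, ∀ e ∈ supp (f i), lab e = u := by
    intro i hi
    obtain ⟨e1, e2, e3, h12, h13, h23, h1, h2, h3, htr⟩ :=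
      cycle_aux hne hinj (hcyc i) (hli.ne_zero i)
    have hi3 : (supp (f i)).card = 3 := by simpa [hT] using hi
    have := htri _ _ _ (htr hi3)
    have hS : supp (f i) = {e1, e2, e3} := by
      symm
      apply Finset.eq_of_subset_of_card_le
      · intro x hx
        simp only [Finset.mem_insert, Finset.mem_singleton] at hx
        rw [mem_supp]
        rcases hx with rfl | rfl | rfl <;> assumption
      · rw [hi3, Finset.card_eq_three.2 ⟨e1, e2, e3, h12, h13, h23, rfl⟩]
    refine ⟨lab e1, ?_⟩
    intro e he
    rw [hS] at he
    simp only [Finset.mem_insert, Finset.mem_singleton] at he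
    rcases he with rfl | rfl | rfl
    · rfl
    · exact this.1.symm
    · exact this.2.symm
  rcases isEmpty_or_nonempty E with hE | ⟨⟨e0⟩⟩
  · simp
  have : ∀ i : κ, ∃ u, i ∈ T → ∀ e ∈ supp (f i), lab e = u := by
    intro i
    by_cases hi : i ∈ T
    · obtain ⟨u, hu⟩ := hex i hi
      exact ⟨u, fun _ => hu⟩
    · exact ⟨lab e0, fun h => absurd h hi⟩
  choose L hL using this
  have hU : ∀ u, 3 * k * (T.filter (fun i => L i = u)).card ≤
      (2 * k - 1) * (Finset.univ.filter (fun e => lab e = u)).card := by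
    intro u
    rcases (T.filter (fun i => L i = u)).eq_empty_or_nonempty with h0 | hne0
    · rw [h0]; simp
    · have hcc := cover_count hne hinj hli hcyc h2 _ hne0 (Finset.univ.filter (fun e => lab e = u))
        (by
          intro i hi e he
          simp only [Finset.mem_filter, Finset.mem_univ, true_and] at hi ⊢
          rw [hL i hi.1 e he, hi.2])
      have hs : ∑ i ∈ T.filter (fun i => L i = u), (supp (f i)).card =
          ∑ i ∈ T.filter (fun i => L i = u), 3 := by
        apply Finset.sum_congr rfl
        intro i hi
        have := (Finset.mem_filter.1 hi).1
        simpa [hT] using this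
      rw [hs] at hcc
      simp only [Finset.sum_const, smul_eq_mul] at hcc
      have hu := hlab u
      generalize (T.filter (fun i => L i = u)).card = x at *
      generalize (Finset.univ.filter (fun e => lab e = u)).card = m at *
      obtain ⟨j, rfl⟩ : ∃ j, k = j + 1 := ⟨k - 1, by omega⟩
      have : 2 * (j + 1) - 1 = 2 * j + 1 := by omega
      rw [this]
      nlinarith
  have hA : T.card = ∑ u : ι, (T.filter (fun i => L i = u)).card := by
    convert Finset.card_eq_sum_card_fiberwise (s := T) (t := Finset.univ) (f := L)
      (fun _ _ => Finset.mem_coe.2 (Finset.mem_univ _))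
  have hB : (Finset.univ : Finset E).card =
      ∑ u : ι, (Finset.univ.filter (fun e => lab e = u)).card := by
    convert Finset.card_eq_sum_card_fiberwise (s := (Finset.univ : Finset E)) (t := Finset.univ)
      (f := lab) (fun _ _ => Finset.mem_coe.2 (Finset.mem_univ _))
  have hsum := Finset.sum_le_sum (fun u (_ : u ∈ (Finset.univ : Finset ι)) => hU u)
  rw [← Finset.mul_sum, ← Finset.mul_sum,
    ← hA, ← hB] at hsum
  -- total count
  have htot : ∑ i : κ, (supp (f i)).card ≤ 2 * Fintype.card E := by
    rcases isEmpty_or_nonempty κ with hκ | hκ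
    · simp
    · have := cover_count hne hinj hli hcyc h2 Finset.univ Finset.univ_nonempty Finset.univ
        (fun i _ => Finset.subset_univ _)
      rw [Finset.card_univ] at this
      omega
  have h4 : ∑ i : κ, 4 ≤ ∑ i : κ, ((supp (f i)).card + if i ∈ T then 1 else 0) := by
    apply Finset.sum_le_sum
    intro i _
    have := h3 i
    split_ifs with hi
    · omega
    · simp [hT] at hi
      omega
  rw [Finset.sum_add_distrib] at h4
  simp only [Finset.sum_const, Finset.card_univ, smul_eq_mul, Finset.sum_ite_mem,
    Finset.univ_inter, mul_one] at h4 hsum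
  obtain ⟨j, rfl⟩ : ∃ j, k = j + 1 := ⟨k - 1, by omega⟩
  have h21 : 2 * (j + 1) - 1 = 2 * j + 1 := by omega
  rw [h21] at hsum
  have hVle : Fintype.card V - 1 ≤ Fintype.card V := Nat.sub_le _ _
  have hfin : Fintype.card E ≤ Fintype.card κ + Fintype.card V := by omega
  have h5 : 4 * Fintype.card E ≤ 2 * Fintype.card E + T.card + 4 * Fintype.card V := by omega
  nlinarith

end PUB

namespace PUB
open scoped Classical

/-- grid edges: the edge `(p, d)` joins `p` to `p + off d` -/
abbrev GE := (ℤ × ℤ) × Bool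

/-- direction of a grid edge -/
def off : Bool → ℤ × ℤ
  | false => (1, 0)
  | true => (0, 1)

/-- end of a grid edge -/
def tgt (g : GE) : ℤ × ℤ := g.1 + off g.2

/-- the second square next to a grid edge (the first is `g.1`) -/
def sq (g : GE) : ℤ × ℤ := g.1 - off (!g.2)

/-- vertex boundary of a grid chain -/
def gbd (w : GE → ZMod 2) (p : ℤ × ℤ) : ZMod 2 :=
  (w (p, false) + w (p - off false, false)) + (w (p, true) + w (p - off true, true))

theorem zmod2_add_self (x : ZMod 2) : x + x = 0 := by revert x; decide

theorem antidiff (g : ℤ → ZMod 2) : ∃ G : ℤ → ZMod 2, ∀ i, G i + G (i - 1) = g i := by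
  refine ⟨fun i => ∑ x ∈ Finset.Ioc 0 i, g x + ∑ x ∈ Finset.Ioc i 0, g x, fun i => ?_⟩
  by_cases h : 0 < i
  · have h1 : Finset.Ioc i 0 = ∅ := by ext x; simp; omega
    have h2 : Finset.Ioc (i - 1) 0 = ∅ := by ext x; simp; omega
    have h3 : Finset.Ioc 0 i = insert i (Finset.Ioc 0 (i - 1)) := by ext x; simp; omega
    have h4 : i ∉ Finset.Ioc 0 (i - 1) := by simp
    simp only [h1, h2, h3, Finset.sum_insert h4, Finset.sum_empty, add_zero]
    rw [add_assoc, zmod2_add_self, add_zero]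
  · have h1 : Finset.Ioc 0 i = ∅ := by ext x; simp; omega
    have h2 : Finset.Ioc 0 (i - 1) = ∅ := by ext x; simp; omega
    have h3 : Finset.Ioc (i - 1) 0 = insert i (Finset.Ioc i 0) := by ext x; simp; omega
    have h4 : i ∉ Finset.Ioc i 0 := by simp
    simp only [h1, h2, h3, Finset.sum_insert h4, Finset.sum_empty, zero_add]
    rw [add_comm (g i), ← add_assoc, zmod2_add_self, zero_add]

theorem grid_exact (w : GE → ZMod 2) (hw : ∀ p, gbd w p = 0) :
    ∃ c : ℤ × ℤ → ZMod 2, ∀ g : GE, w g = c g.1 + c (sq g) := by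
  obtain ⟨C0, hC0⟩ := antidiff (fun i => w ((i, 0), true))
  choose H hH using fun i : ℤ => antidiff (fun j => w ((i, j), false))
  let c : ℤ × ℤ → ZMod 2 := fun p => C0 p.1 + H p.1 p.2 + H p.1 0
  have hc1 : ∀ i j, w ((i, j), false) = c (i, j) + c (i, j - 1) := by
    intro i j
    rw [← hH i j]
    simp only [c]
    have := zmod2_add_self (C0 i + H i 0)
    linear_combination -this
  have hstep : ∀ i j : ℤ, w ((i, j), false) + w ((i - 1, j), false) + w ((i, j), true) +
      w ((i, j - 1), true) = 0 := by
    intro i j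
    have := hw (i, j)
    simp only [gbd, off, Prod.mk_sub_mk, sub_zero] at this
    linear_combination this
  have hc2 : ∀ i j, w ((i, j), true) = c (i, j) + c (i - 1, j) := by
    intro i j
    induction j using Int.induction_on with
    | zero =>
      rw [← hC0 i]
      simp only [c]
      have := zmod2_add_self (H i 0)
      have := zmod2_add_self (H (i - 1) 0)
      linear_combination (-1 : ZMod 2) * zmod2_add_self (H i 0) - this
    | succ j ih =>
      have h1 := hstep i (j + 1)
      have h2 := hc1 i (j + 1)
      have h3 := hc1 (i - 1) (j + 1)
      simp only [add_sub_cancel_right] at h1 h2 h3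
      have := zmod2_add_self (c (i, (j : ℤ) + 1) + c (i - 1, (j : ℤ) + 1) + c (i, (j : ℤ)) + c (i - 1, (j : ℤ)))
      linear_combination h1 - h2 - h3 - ih - this
    | pred j ih =>
      have h1 := hstep i (-j)
      have h2 := hc1 i (-j)
      have h3 := hc1 (i - 1) (-j)
      have := zmod2_add_self (c (i, -(j : ℤ)) + c (i - 1, -(j : ℤ)))
      have := zmod2_add_self (c (i, -(j : ℤ) - 1) + c (i - 1, -(j : ℤ) - 1))
      linear_combination h1 - h2 - h3 - ih - zmod2_add_self (c (i, -(j : ℤ)) + c (i - 1, -(j : ℤ))) - this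
  refine ⟨c, ?_⟩
  rintro ⟨⟨i, j⟩, d⟩
  cases d
  · simpa [sq, off] using hc1 i j
  · simpa [sq, off] using hc2 i j

theorem gbd_cob (c : ℤ × ℤ → ZMod 2) (p : ℤ × ℤ) :
    gbd (fun g => c g.1 + c (sq g)) p = 0 := by
  obtain ⟨i, j⟩ := p
  simp only [gbd, sq, off, Bool.not_false, Bool.not_true, Prod.mk_sub_mk, sub_zero]
  generalize c (i, j) = x1
  generalize c (i, j - 1) = x2
  generalize c (i - 1, j) = x3
  generalize c (i - 1, j - 1) = x4
  revert x1 x2 x3 x4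
  decide

/-- adjacency in the grid -/
def gadj (p q : ℤ × ℤ) : Prop := ∃ g : GE, (g.1 = p ∧ tgt g = q) ∨ (g.1 = q ∧ tgt g = p)

theorem gadj_symm {p q : ℤ × ℤ} (h : gadj p q) : gadj q p := by
  obtain ⟨g, h⟩ := h
  exact ⟨g, h.symm⟩

/-- one step inside `B` -/
def gstep (B : Set (ℤ × ℤ)) (p q : ℤ × ℤ) : Prop := p ∈ B ∧ q ∈ B ∧ gadj p q

/-- connectedness in the grid -/
def GConn (B : Set (ℤ × ℤ)) : Prop := ∀ p ∈ B, ∀ q ∈ B, Relation.ReflTransGen (gstep B) p q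

theorem gbd_add (w w' : GE → ZMod 2) (p : ℤ × ℤ) : gbd (w + w') p = gbd w p + gbd w' p := by
  simp [gbd]; ring

theorem gbd_smul (x : ZMod 2) (w : GE → ZMod 2) (p : ℤ × ℤ) : gbd (x • w) p = x * gbd w p := by
  simp [gbd]; ring

theorem gbd_zero (p : ℤ × ℤ) : gbd 0 p = 0 := by simp [gbd]

theorem gbd_sum {ι : Type} (s : Finset ι) (w : ι → GE → ZMod 2) (p : ℤ × ℤ) :
    gbd (∑ i ∈ s, w i) p = ∑ i ∈ s, gbd (w i) p := by
  induction s using Finset.induction_on with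
  | empty => simp [gbd_zero]
  | insert a s ha ih => rw [Finset.sum_insert ha, Finset.sum_insert ha, gbd_add, ih]

/-- indicator -/
noncomputable def dl {α : Type} (a b : α) : ZMod 2 := if a = b then 1 else 0

theorem gbd_single (g : GE) (p : ℤ × ℤ) : gbd (dl g) p = dl g.1 p + dl (tgt g) p := by
  obtain ⟨⟨i, j⟩, d⟩ := g
  obtain ⟨a, b⟩ := p
  cases d
  · simp only [gbd, dl, off, tgt, Prod.mk.injEq, Prod.mk_sub_mk, Prod.mk_add_mk]
    simp [eq_sub_iff_add_eq]
  · simp only [gbd, dl, off, tgt, Prod.mk.injEq, Prod.mk_sub_mk, Prod.mk_add_mk]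
    simp [eq_sub_iff_add_eq]

theorem walk_chain {B : Set (ℤ × ℤ)} {p q : ℤ × ℤ} (h : Relation.ReflTransGen (gstep B) p q) :
    ∃ w : GE → ZMod 2, (∀ g, w g ≠ 0 → g.1 ∈ B ∧ tgt g ∈ B) ∧
      ∀ x, gbd w x = dl p x + dl q x := by
  induction h with
  | refl => exact ⟨0, by simp, fun x => by rw [gbd_zero, zmod2_add_self]⟩
  | @tail b c _ hbc ih =>
    obtain ⟨w, hw, hb⟩ := ih
    obtain ⟨hbB, hcB, g, hg⟩ := hbc
    refine ⟨w + dl g, ?_, ?_⟩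
    · intro g' hg'
      by_cases hgg : g = g'
      · subst hgg
        rcases hg with ⟨h1, h2⟩ | ⟨h1, h2⟩ <;> rw [h1, h2] <;> exact ⟨by assumption, by assumption⟩
      · apply hw
        simpa [dl, hgg] using hg'
    · intro x
      rw [gbd_add, hb, gbd_single]
      have := zmod2_add_self (dl b x)
      rcases hg with ⟨h1, h2⟩ | ⟨h1, h2⟩ <;> rw [h1, h2] <;> linear_combination this

theorem sum_dl (B : Finset (ℤ × ℤ)) (a : ℤ × ℤ) :
    ∑ x ∈ B, dl a x = if a ∈ B then 1 else 0 := by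
  split_ifs with h
  · rw [Finset.sum_eq_single a]
    · simp [dl]
    · intro b _ hb
      simp [dl, hb.symm]
    · intro h'; exact absurd h h'
  · apply Finset.sum_eq_zero
    intro x hx
    have : a ≠ x := fun h' => h (h' ▸ hx)
    simp [dl, this]

/-- sum of the vertex boundaries over a finite set -/
theorem sum_gbd (B : Finset (ℤ × ℤ)) (w : GE → ZMod 2) (G : Finset GE)
    (hG : ∀ g : GE, g.1 ∈ B ∨ tgt g ∈ B → g ∈ G) :
    ∑ p ∈ B, gbd w p =
      ∑ g ∈ G, w g * ((if g.1 ∈ B then 1 else 0) + (if tgt g ∈ B then 1 else 0)) := by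
  have key : ∀ p ∈ B, gbd w p = ∑ g ∈ G, w g * (dl g.1 p + dl (tgt g) p) := by
    intro p hp
    have hd : ∀ g : GE, (dl g.1 p + dl (tgt g) p : ZMod 2) = gbd (dl g) p := fun g =>
      (gbd_single g p).symm
    have hx : gbd w p = gbd (∑ g ∈ G, w g • (dl g : GE → ZMod 2)) p := by
      have hval : ∀ g : GE, g.1 = p ∨ tgt g = p →
          w g = (∑ g ∈ G, w g • (dl g : GE → ZMod 2)) g := by
        intro g hg
        have hgG : g ∈ G := hG g (by rcases hg with h | h <;> simp [h, hp])
        rw [Finset.sum_apply, Finset.sum_eq_single g]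
        · simp [dl]
        · intro b _ hb
          simp [dl, hb]
        · intro h; exact absurd hgG h
      unfold gbd
      rw [hval (p, false) (by simp), hval (p, true) (by simp),
        hval (p - off false, false) (by simp [tgt]), hval (p - off true, true) (by simp [tgt])]
    rw [hx, gbd_sum]
    apply Finset.sum_congr rfl
    intro g _
    rw [gbd_smul, hd]
  rw [Finset.sum_congr rfl key, Finset.sum_comm]
  apply Finset.sum_congr rfl
  intro g _
  rw [← Finset.mul_sum, Finset.sum_add_distrib, sum_dl, sum_dl]

theorem grid_dual {V E : Type} [Fintype V] [Fintype E] {s t : E → V} (hne : ∀ e, s e ≠ t e)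
    (hinj : ∀ e e', s(s e, t e) = s(s e', t e') → e = e')
    (B : V → Finset (ℤ × ℤ)) (hBne : ∀ v, (B v).Nonempty)
    (hconn : ∀ v, GConn (B v : Set (ℤ × ℤ)))
    (hdisj : ∀ u v p, p ∈ B u → p ∈ B v → u = v)
    (ge : E → GE) (hs : ∀ e, (ge e).1 ∈ B (s e)) (ht : ∀ e, tgt (ge e) ∈ B (t e)) :
    HasDual s t := by
  have hgeinj : Function.Injective ge := by
    intro e e' h
    apply hinj
    have h1 := hdisj _ _ _ (hs e) (h ▸ hs e')
    have h2 := hdisj _ _ _ (ht e) (h ▸ ht e')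
    rw [h1, h2]
  have hnin : ∀ e v, ¬ ((ge e).1 ∈ B v ∧ tgt (ge e) ∈ B v) := by
    rintro e v ⟨h1, h2⟩
    exact hne e ((hdisj _ _ _ (hs e) h1).trans (hdisj _ _ _ h2 (ht e)))
  -- unused edges
  let unused : GE → Prop := fun g => (∀ e, ge e ≠ g) ∧ ∀ v, ¬ (g.1 ∈ B v ∧ tgt g ∈ B v)
  let r : ℤ × ℤ → ℤ × ℤ → Prop := fun x y => ∃ g, unused g ∧ g.1 = x ∧ sq g = y
  let a' : E → Quot r := fun e => Quot.mk r (ge e).1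
  let b' : E → Quot r := fun e => Quot.mk r (sq (ge e))
  let F := {x : Quot r // x ∈ Set.range a' ∪ Set.range b'}
  have hFf : Finite F := Set.Finite.to_subtype ((Set.finite_range a').union (Set.finite_range b'))
  refine ⟨F, hFf, fun e => ⟨a' e, Or.inl ⟨e, rfl⟩⟩, fun e => ⟨b' e, Or.inr ⟨e, rfl⟩⟩, ?_⟩
  intro z
  constructor
  · intro hz
    choose P hP using hBne
    have hw1 := fun e => walk_chain (hconn (s e) (ge e).1 (hs e) (P (s e)) (hP _))
    have hw2 := fun e => walk_chain (hconn (t e) (tgt (ge e)) (ht e) (P (t e)) (hP _))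
    choose w1 hw1s hw1b using hw1
    choose w2 hw2s hw2b using hw2
    let y : E → GE → ZMod 2 := fun e => dl (ge e) + w1 e + w2 e
    have hyb : ∀ e x, gbd (y e) x = dl (P (s e)) x + dl (P (t e)) x := by
      intro e x
      simp only [y]
      rw [gbd_add, gbd_add, gbd_single, hw1b, hw2b]
      have h1 := zmod2_add_self (dl (ge e).1 x)
      have h2 := zmod2_add_self (dl (tgt (ge e)) x)
      linear_combination h1 + h2
    let w : GE → ZMod 2 := ∑ e, z e • y e
    have hwb : ∀ x, gbd w x = 0 := by
      intro x
      simp only [w]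
      rw [gbd_sum]
      have : ∀ e, gbd (z e • y e) x =
          ∑ v, dl (P v) x * (z e * ((if s e = v then 1 else 0) + (if t e = v then 1 else 0))) := by
        intro e
        rw [gbd_smul, hyb]
        simp only [mul_add, Finset.sum_add_distrib]
        simp
        ring
      simp only [this]
      rw [Finset.sum_comm]
      apply Finset.sum_eq_zero
      intro v _
      rw [← Finset.mul_sum]
      have := hz v
      unfold bd at this
      rw [this, mul_zero]
    have hwge : ∀ e, w (ge e) = z e := by
      intro e
      simp only [w]
      rw [Finset.sum_apply, Finset.sum_eq_single e]
      · have h1 : w1 e (ge e) = 0 := by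
          by_contra h
          exact hnin _ _ (hw1s _ _ h)
        have h2 : w2 e (ge e) = 0 := by
          by_contra h
          exact hnin _ _ (hw2s _ _ h)
        simp [y, h1, h2, dl]
      · intro e' _ he'
        have h1 : w1 e' (ge e) = 0 := by
          by_contra h
          exact hnin _ _ (hw1s _ _ h)
        have h2 : w2 e' (ge e) = 0 := by
          by_contra h
          exact hnin _ _ (hw2s _ _ h)
        have h3 : ge e' ≠ ge e := fun h => he' (hgeinj h)
        simp [y, h1, h2, dl, h3]
      · simp
    have hwun : ∀ g, unused g → w g = 0 := by
      intro g hg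
      simp only [w]
      rw [Finset.sum_apply]
      apply Finset.sum_eq_zero
      intro e _
      have h1 : w1 e g = 0 := by
        by_contra h
        exact hg.2 _ (hw1s _ _ h)
      have h2 : w2 e g = 0 := by
        by_contra h
        exact hg.2 _ (hw2s _ _ h)
      simp [y, h1, h2, dl, hg.1 e]
    obtain ⟨c, hc⟩ := grid_exact w hwb
    have hresp : ∀ x y, r x y → c x = c y := by
      rintro _ _ ⟨g, hg, rfl, rfl⟩
      have := hc g
      rw [hwun g hg] at this
      have h2 := zmod2_add_self (c (sq g))
      linear_combination -this - h2
    refine ⟨fun x => Quot.lift c hresp x.1, fun e => ?_⟩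
    rw [← hwge e, hc]
  · rintro ⟨c, hc⟩ v
    let c' : ℤ × ℤ → ZMod 2 := fun x =>
      if h : Quot.mk r x ∈ Set.range a' ∪ Set.range b' then c ⟨Quot.mk r x, h⟩ else 0
    let w : GE → ZMod 2 := fun g => c' g.1 + c' (sq g)
    have hwge : ∀ e, w (ge e) = z e := by
      intro e
      rw [hc e]
      have h1 : Quot.mk r (ge e).1 ∈ Set.range a' ∪ Set.range b' := Or.inl ⟨e, rfl⟩
      have h2 : Quot.mk r (sq (ge e)) ∈ Set.range a' ∪ Set.range b' := Or.inr ⟨e, rfl⟩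
      simp only [w, c']
      rw [dif_pos h1, dif_pos h2]
    have hwun : ∀ g, unused g → w g = 0 := by
      intro g hg
      have : Quot.mk r g.1 = Quot.mk r (sq g) := Quot.sound ⟨g, hg, rfl, rfl⟩
      simp only [w, c', this]
      exact zmod2_add_self _
    have hb : ∀ p, gbd w p = 0 := fun p => gbd_cob c' p
    let G : Finset GE := ((B v).product Finset.univ) ∪
      ((B v).product (Finset.univ : Finset Bool)).image (fun x => (x.1 - off x.2, x.2)) ∪
      Finset.univ.image ge
    have hG : ∀ g : GE, g.1 ∈ B v ∨ tgt g ∈ B v → g ∈ G := by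
      rintro ⟨p, d⟩ (h | h)
      · exact Finset.mem_union_left _ (Finset.mem_union_left _
          (Finset.mem_product.2 ⟨h, Finset.mem_univ _⟩))
      · refine Finset.mem_union_left _ (Finset.mem_union_right _ (Finset.mem_image.2
          ⟨(tgt (p, d), d), Finset.mem_product.2 ⟨h, Finset.mem_univ _⟩, ?_⟩))
        simp [tgt]
    have h1 := sum_gbd (B v) w G hG
    rw [Finset.sum_eq_zero (fun p _ => hb p)] at h1
    have hsub : Finset.univ.image ge ⊆ G := Finset.subset_union_right
    rw [← Finset.sum_subset hsub, Finset.sum_image (fun x _ y _ h => hgeinj h)] at h1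
    · unfold bd
      refine Eq.trans ?_ h1.symm
      apply Finset.sum_congr rfl
      intro e _
      have hse : (ge e).1 ∈ B v ↔ s e = v :=
        ⟨fun h => hdisj _ _ _ (hs e) h, fun h => h ▸ hs e⟩
      have hte : tgt (ge e) ∈ B v ↔ t e = v :=
        ⟨fun h => hdisj _ _ _ (ht e) h, fun h => h ▸ ht e⟩
      simp only [hwge, hse, hte]
    · intro g _ hg
      have hg' : ∀ e, ge e ≠ g := by
        intro e h
        exact hg (Finset.mem_image.2 ⟨e, Finset.mem_univ _, h⟩)
      by_cases hu : unused g
      · rw [hwun g hu, zero_mul]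
      · have : ∃ u, g.1 ∈ B u ∧ tgt g ∈ B u := by
          by_contra hcon
          push Not at hcon
          exact hu ⟨hg', fun u h => hcon u h.1 h.2⟩
        obtain ⟨u, hu1, hu2⟩ := this
        have : g.1 ∈ B v ↔ tgt g ∈ B v := by
          constructor
          · intro h; rwa [← hdisj _ _ _ hu1 h]
          · intro h; rwa [← hdisj _ _ _ hu2 h]
        simp only [this]
        rw [zmod2_add_self, mul_zero]

end PUB

namespace PUB
open scoped Classical

theorem GConn_mono_step {A B : Set (ℤ × ℤ)} (h : A ⊆ B) {p q : ℤ × ℤ}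
    (hpq : Relation.ReflTransGen (gstep A) p q) : Relation.ReflTransGen (gstep B) p q :=
  Relation.ReflTransGen.mono (fun _ _ hx => ⟨h hx.1, h hx.2.1, hx.2.2⟩) _ _ hpq

theorem gstep_symm (B : Set (ℤ × ℤ)) {p q : ℤ × ℤ} (h : gstep B p q) : gstep B q p :=
  ⟨h.2.1, h.1, gadj_symm h.2.2⟩

theorem rtg_symm {B : Set (ℤ × ℤ)} {p q : ℤ × ℤ} (h : Relation.ReflTransGen (gstep B) p q) :
    Relation.ReflTransGen (gstep B) q p := by
  induction h with
  | refl => exact .refl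
  | tail _ hbc ih => exact ih.head (gstep_symm B hbc)

theorem GConn_union {A B : Set (ℤ × ℤ)} (hA : GConn A) (hB : GConn B) {p : ℤ × ℤ}
    (hpA : p ∈ A) (hpB : p ∈ B) : GConn (A ∪ B) := by
  have key : ∀ x ∈ A ∪ B, Relation.ReflTransGen (gstep (A ∪ B)) x p := by
    rintro x (hx | hx)
    · exact GConn_mono_step Set.subset_union_left (hA x hx p hpA)
    · exact GConn_mono_step Set.subset_union_right (hB x hx p hpB)
  intro x hx y hy
  exact (key x hx).trans (rtg_symm (key y hy))

theorem voronoi {S T : Type} [Finite S] [Finite T] (I : T → S → Prop)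
    (D : S → Set (ℤ × ℤ)) (Y : T → Set (ℤ × ℤ))
    (hDne : ∀ σ, (D σ).Nonempty) (hDfin : ∀ σ, (D σ).Finite) (hDc : ∀ σ, GConn (D σ))
    (hDd : ∀ σ σ' p, p ∈ D σ → p ∈ D σ' → σ = σ')
    (hYfin : ∀ τ, (Y τ).Finite) (hYc : ∀ τ, GConn (Y τ))
    (hDY : ∀ τ σ, I τ σ → D σ ⊆ Y τ)
    (hI : ∀ τ σ p, p ∈ Y τ → p ∈ D σ → I τ σ)
    (hYY : ∀ τ τ' p, τ ≠ τ' → p ∈ Y τ → p ∈ Y τ' → ∃ σ, I τ σ ∧ I τ' σ ∧ p ∈ D σ) :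
    ∃ B : S → Finset (ℤ × ℤ), (∀ σ, (B σ).Nonempty) ∧ (∀ σ, GConn (B σ : Set (ℤ × ℤ))) ∧
      (∀ σ σ' p, p ∈ B σ → p ∈ B σ' → σ = σ') ∧
      ∀ τ σ σ', I τ σ → I τ σ' → Relation.ReflTransGen
        (fun a b => I τ a ∧ I τ b ∧ ∃ p ∈ B a, ∃ q ∈ B b, gadj p q) σ σ' := by
  let W : Set (ℤ × ℤ) := (⋃ σ, D σ) ∪ ⋃ τ, Y τ
  have hW : W.Finite := (Set.finite_iUnion hDfin).union (Set.finite_iUnion hYfin)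
  let Fam : Set (S → Set (ℤ × ℤ)) := {B | (∀ σ, D σ ⊆ B σ) ∧ (∀ σ, GConn (B σ)) ∧
    (∀ σ σ' p, p ∈ B σ → p ∈ B σ' → σ = σ') ∧
    ∀ σ p, p ∈ B σ → p ∈ D σ ∨ ∃ τ, I τ σ ∧ p ∈ Y τ}
  have hFam : Fam.Finite := by
    apply (Set.Finite.pi' (fun _ : S => hW.finite_subsets)).subset
    intro B hB σ p hp
    rcases hB.2.2.2 σ p hp with h | ⟨τ, _, h⟩
    · exact Or.inl (Set.mem_iUnion.2 ⟨σ, h⟩)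
    · exact Or.inr (Set.mem_iUnion.2 ⟨τ, h⟩)
  obtain ⟨B, hB⟩ := hFam.exists_maximal ⟨D, fun _ => subset_rfl, hDc, hDd, fun _ _ h => Or.inl h⟩
  obtain ⟨hBD, hBc, hBd, hBs⟩ := hB.prop
  have hlab : ∀ τ σ p, p ∈ Y τ → p ∈ B σ → I τ σ := by
    intro τ σ p hp hpB
    rcases hBs σ p hpB with h | ⟨τ', hτ', h⟩
    · exact hI _ _ _ hp h
    · by_cases hττ : τ = τ'
      · subst hττ; exact hτ'
      · obtain ⟨σ', h1, h2, h3⟩ := hYY τ τ' p hττ hp h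
        rw [hBd σ σ' p hpB (hBD _ h3)]
        exact h1
  have hcov : ∀ τ σ0, I τ σ0 → ∀ p ∈ Y τ, ∃ σ, I τ σ ∧ p ∈ B σ := by
    intro τ σ0 h0 p hp
    obtain ⟨p0, hp0⟩ := hDne σ0
    have hw := hYc τ p0 (hDY _ _ h0 hp0) p hp
    clear hp
    induction hw with
    | refl => exact ⟨σ0, h0, hBD _ hp0⟩
    | @tail b c _ hbc ih =>
      obtain ⟨σ, hσ, hbσ⟩ := ih
      by_cases hc : ∃ σ', c ∈ B σ'
      · obtain ⟨σ', hσ'⟩ := hc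
        exact ⟨σ', hlab _ _ _ hbc.2.1 hσ', hσ'⟩
      · push Not at hc
        exfalso
        let B' : S → Set (ℤ × ℤ) := fun x => if x = σ then B σ ∪ {b, c} else B x
        have hB'mem : ∀ x p, p ∈ B' x → p ∈ B x ∨ (x = σ ∧ p = c) := by
          intro x p hp
          by_cases hx : x = σ
          · subst hx
            simp only [B', if_true] at hp
            rcases hp with h | h | h
            · exact Or.inl h
            · rw [h]; exact Or.inl hbσ
            · exact Or.inr ⟨rfl, h⟩
          · simp only [B', if_neg hx] at hp
            exact Or.inl hp
        have hle : B ≤ B' := by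
          intro x
          by_cases hx : x = σ
          · subst hx
            simp only [B', if_true]
            exact Set.subset_union_left
          · simp only [B', if_neg hx]
            exact subset_rfl
        have hbcc : GConn ({b, c} : Set (ℤ × ℤ)) := by
          have h1 : gstep {b, c} b c := ⟨by simp, by simp, hbc.2.2⟩
          rintro x (rfl | rfl) y (rfl | rfl)
          · exact .refl
          · exact .single h1
          · exact .single (gstep_symm _ h1)
          · exact .refl
        have hB'F : B' ∈ Fam := by
          refine ⟨fun x => (hBD x).trans (hle x), ?_, ?_, ?_⟩
          · intro x
            by_cases hx : x = σ
            · subst hx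
              simp only [B', if_true]
              exact GConn_union (hBc _) hbcc hbσ (by simp)
            · simp only [B', if_neg hx]
              exact hBc x
          · intro x x' p hp hp'
            rcases hB'mem _ _ hp with h | ⟨h, h'⟩ <;> rcases hB'mem _ _ hp' with g | ⟨g, g'⟩
            · exact hBd _ _ _ h g
            · subst g'; exact absurd h (hc _)
            · subst h'; exact absurd g (hc _)
            · rw [h, g]
          · intro x p hp
            rcases hB'mem _ _ hp with h | ⟨h, h'⟩
            · exact hBs _ _ h
            · subst h h'
              exact Or.inr ⟨τ, hσ, hbc.2.1⟩
        have := hB.le_of_ge hB'F hle σ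
        apply hc σ
        apply this
        simp [B']
  have hBfin : ∀ σ, (B σ).Finite := by
    intro σ
    apply hW.subset
    intro p hp
    rcases hBs σ p hp with h | ⟨τ, _, h⟩
    · exact Or.inl (Set.mem_iUnion.2 ⟨σ, h⟩)
    · exact Or.inr (Set.mem_iUnion.2 ⟨τ, h⟩)
  refine ⟨fun σ => (hBfin σ).toFinset, ?_, ?_, ?_, ?_⟩
  · intro σ
    obtain ⟨p, hp⟩ := hDne σ
    exact ⟨p, by simpa using hBD _ hp⟩
  · intro σ
    simpa using hBc σ
  · intro σ σ' p h h'
    exact hBd σ σ' p (by simpa using h) (by simpa using h')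
  · intro τ σ σ' hσ hσ'
    obtain ⟨p, hp⟩ := hDne σ
    obtain ⟨q, hq⟩ := hDne σ'
    have hw := hYc τ p (hDY _ _ hσ hp) q (hDY _ _ hσ' hq)
    have hqB := hBD _ hq
    clear hq
    induction hw generalizing σ' with
    | refl =>
      rw [hBd σ σ' p (hBD _ hp) hqB]
    | @tail b c _ hbc ih =>
      obtain ⟨σb, h1, h2⟩ := hcov τ σ hσ b hbc.1
      refine (ih σb h1 h2).tail ⟨h1, hσ', b, by simpa using h2, c, by simpa using hqB, hbc.2.2⟩

/-- closed grid cell of mesh `1/N` -/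
def cell (N : ℝ) (p : ℤ × ℤ) : Set (ℝ × ℝ) :=
  {x | ((p.1 : ℝ) ≤ N * x.1 ∧ N * x.1 ≤ p.1 + 1) ∧ ((p.2 : ℝ) ≤ N * x.2 ∧ N * x.2 ≤ p.2 + 1)}

/-- cells meeting a set -/
def cells (N : ℝ) (K : Set (ℝ × ℝ)) : Set (ℤ × ℤ) := {p | ∃ x ∈ K, x ∈ cell N p}

theorem exists_cell (N : ℝ) (x : ℝ × ℝ) : ∃ p, x ∈ cell N p :=
  ⟨(⌊N * x.1⌋, ⌊N * x.2⌋), ⟨Int.floor_le _, (Int.lt_floor_add_one _).le⟩,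
    ⟨Int.floor_le _, (Int.lt_floor_add_one _).le⟩⟩

theorem cell_dist {N : ℝ} (hN : 0 < N) {p : ℤ × ℤ} {x y : ℝ × ℝ} (hx : x ∈ cell N p)
    (hy : y ∈ cell N p) : dist x y ≤ 1 / N := by
  obtain ⟨⟨a1, a2⟩, a3, a4⟩ := hx
  obtain ⟨⟨b1, b2⟩, b3, b4⟩ := hy
  rw [Prod.dist_eq, max_le_iff, Real.dist_eq, Real.dist_eq, abs_le, abs_le, ← neg_div,
    div_le_iff₀ hN, le_div_iff₀ hN, div_le_iff₀ hN, le_div_iff₀ hN]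
  refine ⟨⟨?_, ?_⟩, ?_, ?_⟩ <;> nlinarith

theorem near_int (N u : ℝ) : ∀ᶠ w in nhds u, ∀ i : ℤ, (i : ℝ) ≤ N * w → N * w ≤ i + 1 →
    (i : ℝ) ≤ N * u ∧ N * u ≤ i + 1 := by
  have hcont : Filter.Tendsto (fun w : ℝ => N * w) (nhds u) (nhds (N * u)) :=
    (continuous_const.mul continuous_id).tendsto u
  have h1 := hcont.eventually (gt_mem_nhds (Int.lt_floor_add_one (N * u)))
  have h2 := hcont.eventually (lt_mem_nhds (show ((⌈N * u⌉ : ℝ) - 1 < N * u) by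
    linarith [Int.ceil_lt_add_one (N * u)]))
  filter_upwards [h1, h2] with w hw1 hw2 i hi1 hi2
  constructor
  · have : (i : ℝ) < (⌊N * u⌋ + 1 : ℤ) := by push_cast; linarith
    have : i ≤ ⌊N * u⌋ := by
      have := Int.cast_lt.1 this
      omega
    exact Int.le_floor.1 this
  · have : ((⌈N * u⌉ - 1 : ℤ) : ℝ) < (i + 1 : ℤ) := by push_cast; linarith
    have : ⌈N * u⌉ ≤ i + 1 := by
      have := Int.cast_lt.1 this
      omega
    have := Int.ceil_le.1 this
    push_cast at this
    exact this

theorem near_cell (N : ℝ) (x : ℝ × ℝ) : ∀ᶠ y in nhds x, ∀ p, y ∈ cell N p → x ∈ cell N p := by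
  have h1 := (continuous_fst.tendsto x).eventually (near_int N x.1)
  have h2 := (continuous_snd.tendsto x).eventually (near_int N x.2)
  filter_upwards [h1, h2] with y hy1 hy2 p hp
  exact ⟨hy1 p.1 hp.1.1 hp.1.2, hy2 p.2 hp.2.1 hp.2.2⟩

theorem gadj_fst {a b j : ℤ} (h1 : a ≤ b + 1) (h2 : b ≤ a + 1) (h : a ≠ b) :
    gadj (a, j) (b, j) := by
  rcases lt_or_gt_of_ne h with hl | hl
  · exact ⟨((a, j), false), Or.inl ⟨rfl, by simp [tgt, off]; omega⟩⟩
  · exact ⟨((b, j), false), Or.inr ⟨rfl, by simp [tgt, off]; omega⟩⟩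

theorem gadj_snd {a b j : ℤ} (h1 : a ≤ b + 1) (h2 : b ≤ a + 1) (h : a ≠ b) :
    gadj (j, a) (j, b) := by
  rcases lt_or_gt_of_ne h with hl | hl
  · exact ⟨((j, a), true), Or.inl ⟨rfl, by simp [tgt, off]; omega⟩⟩
  · exact ⟨((j, b), true), Or.inr ⟨rfl, by simp [tgt, off]; omega⟩⟩

theorem cells_conn_point {N : ℝ} {K : Set (ℝ × ℝ)} {x : ℝ × ℝ} (hx : x ∈ K) {p q : ℤ × ℤ}
    (hp : x ∈ cell N p) (hq : x ∈ cell N q) :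
    Relation.ReflTransGen (gstep (cells N K)) p q := by
  obtain ⟨a, b⟩ := p
  obtain ⟨c, d⟩ := q
  have hm : x ∈ cell N (c, b) := ⟨hq.1, hp.2⟩
  obtain ⟨⟨a1, a2⟩, a3, a4⟩ := id hp
  obtain ⟨⟨b1, b2⟩, b3, b4⟩ := id hq
  simp only at a1 a2 a3 a4 b1 b2 b3 b4
  have k1 : a ≤ c + 1 := by exact_mod_cast a1.trans b2
  have k2 : c ≤ a + 1 := by exact_mod_cast b1.trans a2
  have k3 : b ≤ d + 1 := by exact_mod_cast a3.trans b4
  have k4 : d ≤ b + 1 := by exact_mod_cast b3.trans a4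
  have s1 : Relation.ReflTransGen (gstep (cells N K)) (a, b) (c, b) := by
    by_cases h : a = c
    · subst h; exact .refl
    · exact .single ⟨⟨x, hx, hp⟩, ⟨x, hx, hm⟩, gadj_fst k1 k2 h⟩
  have s2 : Relation.ReflTransGen (gstep (cells N K)) (c, b) (c, d) := by
    by_cases h : b = d
    · subst h; exact .refl
    · exact .single ⟨⟨x, hx, hm⟩, ⟨x, hx, hq⟩, gadj_snd k3 k4 h⟩
  exact s1.trans s2

theorem cells_conn (N : ℝ) {K : Set (ℝ × ℝ)} (hK : IsPreconnected K) : GConn (cells N K) := by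
  rintro p ⟨x, hx, hxp⟩ q ⟨y, hy, hyq⟩
  have := hK.induction₂ (fun x y => ∀ p q, x ∈ cell N p → y ∈ cell N q →
    Relation.ReflTransGen (gstep (cells N K)) p q) ?_ ?_ ?_ hx hy
  · exact this p q hxp hyq
  · intro x hx
    apply mem_nhdsWithin_of_mem_nhds
    filter_upwards [near_cell N x] with y hy p q hp hq
    exact cells_conn_point hx hp (hy q hq)
  · intro x y z _ _ _ hxy hyz p q hp hq
    obtain ⟨r, hr⟩ := exists_cell N y
    exact (hxy p r hp hr).trans (hyz r q hr hq)
  · intro x y _ _ hxy p q hp hq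
    exact rtg_symm (hxy q p hq hp)

theorem cells_finite {N : ℝ} (hN : 0 < N) {K : Set (ℝ × ℝ)} (hK : IsCompact K) :
    (cells N K).Finite := by
  obtain ⟨R, hR⟩ := hK.isBounded.subset_closedBall 0
  apply (Set.finite_Icc ((⌊-(N * R)⌋ - 1, ⌊-(N * R)⌋ - 1) : ℤ × ℤ)
    ((⌈N * R⌉, ⌈N * R⌉) : ℤ × ℤ)).subset
  rintro ⟨i, j⟩ ⟨x, hx, ⟨a1, a2⟩, a3, a4⟩
  have := hR hx
  rw [Metric.mem_closedBall, Prod.dist_eq, max_le_iff, Real.dist_eq, Real.dist_eq, abs_le,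
    abs_le] at this
  simp only [Prod.fst_zero, Prod.snd_zero, sub_zero] at this a1 a2 a3 a4
  obtain ⟨⟨b1, b2⟩, b3, b4⟩ := this
  have e1 := Int.floor_le (-(N * R))
  have e2 := Int.le_ceil (N * R)
  have c1 := mul_le_mul_of_nonneg_left b1 hN.le
  have c2 := mul_le_mul_of_nonneg_left b2 hN.le
  have c3 := mul_le_mul_of_nonneg_left b3 hN.le
  have c4 := mul_le_mul_of_nonneg_left b4 hN.le
  have f1 : ⌊-(N * R)⌋ ≤ i + 1 := by
    have : ((⌊-(N * R)⌋ : ℤ) : ℝ) ≤ ((i + 1 : ℤ) : ℝ) := by push_cast; nlinarith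
    exact_mod_cast this
  have f2 : i ≤ ⌈N * R⌉ := by
    have : (i : ℝ) ≤ (⌈N * R⌉ : ℝ) := by linarith
    exact_mod_cast this
  have f3 : ⌊-(N * R)⌋ ≤ j + 1 := by
    have : ((⌊-(N * R)⌋ : ℤ) : ℝ) ≤ ((j + 1 : ℤ) : ℝ) := by push_cast; nlinarith
    exact_mod_cast this
  have f4 : j ≤ ⌈N * R⌉ := by
    have : (j : ℝ) ≤ (⌈N * R⌉ : ℝ) := by linarith
    exact_mod_cast this
  exact ⟨⟨by simp; omega, by simp; omega⟩, ⟨by simp; omega, by simp; omega⟩⟩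

theorem compact_conn {X C : Set (ℝ × ℝ)} (hX : IsOpen X) (hXc : IsPathConnected X)
    (hC : IsCompact C) (hCX : C ⊆ X) :
    ∃ L, IsCompact L ∧ IsPreconnected L ∧ C ⊆ interior L ∧ L ⊆ X ∧ L.Nonempty := by
  obtain ⟨q, hq, hjoin⟩ := hXc
  have : ∀ x : X, ∃ L, IsCompact L ∧ IsPreconnected L ∧ L ∈ nhds x.1 ∧ L ⊆ X ∧ q ∈ L := by
    rintro ⟨x, hx⟩
    obtain ⟨r, hr, hrX⟩ := Metric.nhds_basis_closedBall.mem_iff.1 (hX.mem_nhds hx)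
    obtain ⟨γ, hγ⟩ := hjoin hx
    refine ⟨Set.range γ ∪ Metric.closedBall x r, ?_, ?_, ?_, ?_, ?_⟩
    · exact (isCompact_range γ.continuous).union (isCompact_closedBall x r)
    · have hx1 : x ∈ Set.range γ := ⟨1, γ.target⟩
      exact IsPreconnected.union x hx1 (Metric.mem_closedBall_self hr.le)
        (isPreconnected_range γ.continuous) (convex_closedBall x r).isPreconnected
    · exact Filter.mem_of_superset (Metric.closedBall_mem_nhds x hr) Set.subset_union_right
    · rintro y (⟨t, rfl⟩ | hy)
      · exact hγ t
      · exact hrX hy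
    · exact Or.inl ⟨0, γ.source⟩
  choose L h1 h2 h3 h4 h5 using this
  obtain ⟨t, ht⟩ := hC.elim_nhds_subcover' (fun x hx => interior (L (⟨x, hCX hx⟩ : X)))
    (fun x hx => interior_mem_nhds.2 (h3 (⟨x, hCX hx⟩ : X)))
  let M : C → Set (ℝ × ℝ) := fun x => L ⟨x.1, hCX x.2⟩
  refine ⟨{q} ∪ ⋃ x ∈ t, M x, ?_, ?_, ?_, ?_, ⟨q, Or.inl rfl⟩⟩
  · exact isCompact_singleton.union (t.isCompact_biUnion fun x _ => h1 _)
  · apply isPreconnected_of_forall q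
    rintro y (hy | hy)
    · exact ⟨{q}, Set.subset_union_left, rfl, hy, isPreconnected_singleton⟩
    · obtain ⟨x, hx, hyx⟩ := Set.mem_iUnion₂.1 hy
      refine ⟨M x, ?_, h5 _, hyx, h2 _⟩
      intro z hz
      exact Or.inr (Set.mem_biUnion (show x ∈ (t : Set C) from hx) hz)
  · intro c hc
    obtain ⟨x, hx, hcx⟩ := Set.mem_iUnion₂.1 (ht hc)
    refine interior_mono ?_ hcx
    intro z hz
    exact Or.inr (Set.mem_biUnion (show x ∈ (t : Set C) from hx) hz)
  · rintro y (hy | hy)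
    · rw [hy]; exact hq
    · obtain ⟨x, hx, hyx⟩ := Set.mem_iUnion₂.1 hy
      exact h4 _ hyx

theorem top_grid {S T : Type} [Finite S] [Finite T] (I : T → S → Prop)
    (X : S → Set (ℝ × ℝ)) (Y : T → Set (ℝ × ℝ))
    (hXo : ∀ σ, IsOpen (X σ)) (hXc : ∀ σ, IsPathConnected (X σ))
    (hXd : ∀ σ σ' p, p ∈ X σ → p ∈ X σ' → σ = σ')
    (hYo : ∀ τ, IsOpen (Y τ)) (hYc : ∀ τ, IsPathConnected (Y τ))
    (hXY : ∀ τ σ, I τ σ → X σ ⊆ Y τ)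
    (hI : ∀ τ σ p, p ∈ Y τ → p ∈ X σ → I τ σ)
    (hYY : ∀ τ τ' p, τ ≠ τ' → p ∈ Y τ → p ∈ Y τ' → ∃ σ, I τ σ ∧ I τ' σ ∧ p ∈ X σ)
    (huniq : ∀ τ τ' σ σ', τ ≠ τ' → I τ σ → I τ' σ → I τ σ' → I τ' σ' → σ = σ') :
    ∃ B : S → Finset (ℤ × ℤ), (∀ σ, (B σ).Nonempty) ∧ (∀ σ, GConn (B σ : Set (ℤ × ℤ))) ∧
      (∀ σ σ' p, p ∈ B σ → p ∈ B σ' → σ = σ') ∧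
      ∀ τ σ σ', I τ σ → I τ σ' → Relation.ReflTransGen
        (fun a b => I τ a ∧ I τ b ∧ ∃ p ∈ B a, ∃ q ∈ B b, gadj p q) σ σ' := by
  choose q hq using fun σ => (hXc σ).nonempty
  have hK : ∀ τ, ∃ K, IsCompact K ∧ IsPreconnected K ∧ (∀ σ, I τ σ → q σ ∈ K) ∧ K ⊆ Y τ := by
    intro τ
    obtain ⟨K, h1, h2, h3, h4, -⟩ := compact_conn (hYo τ) (hYc τ)
      (C := q '' {σ | I τ σ}) (Set.toFinite _).isCompact (by
        rintro _ ⟨σ, hσ, rfl⟩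
        exact hXY τ σ hσ (hq σ))
    exact ⟨K, h1, h2, fun σ hσ => interior_subset (h3 ⟨σ, hσ, rfl⟩), h4⟩
  choose K hKcomp hKconn hKq hKY using hK
  have hL : ∀ σ, ∃ L, IsCompact L ∧ IsPreconnected L ∧ q σ ∈ L ∧
      (∀ τ τ', τ ≠ τ' → I τ σ → I τ' σ → K τ ∩ K τ' ⊆ interior L) ∧ L ⊆ X σ := by
    intro σ
    let P : Set (T × T) := {x | x.1 ≠ x.2 ∧ I x.1 σ ∧ I x.2 σ}
    obtain ⟨L, h1, h2, h3, h4, -⟩ := compact_conn (hXo σ) (hXc σ)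
      (C := {q σ} ∪ ⋃ x ∈ P, K x.1 ∩ K x.2)
      (isCompact_singleton.union ((Set.toFinite P).isCompact_biUnion
        fun x _ => (hKcomp x.1).inter (hKcomp x.2))) (by
        apply Set.union_subset
        · simpa using hq σ
        · apply Set.iUnion₂_subset
          rintro ⟨τ, τ'⟩ ⟨hne, hτ, hτ'⟩ x ⟨hx, hx'⟩
          obtain ⟨σ', a1, a2, a3⟩ := hYY τ τ' x hne (hKY _ hx) (hKY _ hx')
          rw [huniq τ τ' σ σ' hne hτ hτ' a1 a2]
          exact a3)
    refine ⟨L, h1, h2, interior_subset (h3 (Or.inl rfl)), ?_, h4⟩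
    intro τ τ' hne hτ hτ' x hx
    exact h3 (Or.inr (Set.mem_biUnion (show (τ, τ') ∈ P from ⟨hne, hτ, hτ'⟩) hx))
  choose L hLcomp hLconn hLq hLK hLX using hL
  have hmesh : ∀ δ : ℝ, 0 < δ → ∀ᶠ N : ℝ in Filter.atTop, 0 < N ∧ 1 / N < δ := by
    intro δ hδ
    filter_upwards [Filter.eventually_gt_atTop (1 / δ)] with N hN
    have hN0 : 0 < N := lt_trans (by positivity) hN
    refine ⟨hN0, ?_⟩
    rw [div_lt_iff₀ hN0]
    rw [div_lt_iff₀ hδ] at hN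
    linarith
  have hsub : ∀ (A O : Set (ℝ × ℝ)), IsCompact A → IsOpen O → A ⊆ O →
      ∀ᶠ N : ℝ in Filter.atTop, ∀ p, p ∈ cells N A → cell N p ⊆ O := by
    intro A O hA hO hAO
    obtain ⟨δ, hδ, hth⟩ := hA.exists_thickening_subset_open hO hAO
    filter_upwards [hmesh δ hδ] with N hN
    rintro p ⟨x, hx, hxp⟩ y hy
    apply hth
    rw [Metric.mem_thickening_iff]
    exact ⟨x, hx, (cell_dist hN.1 hy hxp).trans_lt hN.2⟩
  have E1 := Filter.eventually_all.2 fun σ => hsub _ _ (hLcomp σ) (hXo σ) (hLX σ)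
  have E2 := Filter.eventually_all.2 fun τ => hsub _ _ (hKcomp τ) (hYo τ) (hKY τ)
  have E3 : ∀ᶠ N : ℝ in Filter.atTop, ∀ x : T × T, x.1 ≠ x.2 → ∀ p, p ∈ cells N (K x.1) →
      p ∈ cells N (K x.2) → ∃ σ, I x.1 σ ∧ I x.2 σ ∧ p ∈ cells N (L σ) := by
    rw [Filter.eventually_all]
    rintro ⟨τ, τ'⟩
    by_cases hne : τ = τ'
    · exact Filter.Eventually.of_forall fun N h => absurd hne h
    let O : Set (ℝ × ℝ) := ⋃ σ ∈ {σ | I τ σ ∧ I τ' σ}, interior (L σ)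
    have hO : IsOpen O := isOpen_biUnion fun σ _ => isOpen_interior
    have hdis : Disjoint (K τ \ O) (K τ') := by
      rw [Set.disjoint_left]
      rintro x ⟨hx, hxO⟩ hx'
      obtain ⟨σ, h1, h2, h3⟩ := hYY τ τ' x hne (hKY _ hx) (hKY _ hx')
      exact hxO (Set.mem_biUnion (show σ ∈ {σ | I τ σ ∧ I τ' σ} from ⟨h1, h2⟩)
        (hLK σ τ τ' hne h1 h2 ⟨hx, hx'⟩))
    obtain ⟨r, hr, hrd⟩ := Metric.exists_pos_forall_lt_edist ((hKcomp τ).diff hO)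
      (hKcomp τ').isClosed hdis
    filter_upwards [hmesh r hr] with N hN _ p hp hp'
    obtain ⟨x, hx, hxp⟩ := hp
    obtain ⟨y, hy, hyp⟩ := hp'
    have hxO : x ∈ O := by
      by_contra hxO
      have h1 := hrd x ⟨hx, hxO⟩ y hy
      have h2 := (cell_dist hN.1 hxp hyp).trans_lt hN.2
      rw [edist_nndist, ENNReal.coe_lt_coe] at h1
      exact absurd h2 (not_lt.2 (show (r : ℝ) ≤ dist x y from by
        rw [← coe_nndist]; exact_mod_cast h1.le))
    obtain ⟨σ, hσ, hxσ⟩ := Set.mem_iUnion₂.1 hxO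
    exact ⟨σ, hσ.1, hσ.2, x, interior_subset hxσ, hxp⟩
  obtain ⟨N, hE1, hE2, hE3, hN, -⟩ := (E1.and (E2.and (E3.and (hmesh 1 one_pos)))).exists
  have hcellne : ∀ p, (cell N p).Nonempty := by
    intro p
    refine ⟨(p.1 / N, p.2 / N), ?_⟩
    have h1 : N * (p.1 / N) = p.1 := by field_simp
    have h2 : N * (p.2 / N) = p.2 := by field_simp
    simp only [cell, Set.mem_ofPred_eq, h1, h2]
    refine ⟨⟨le_rfl, ?_⟩, le_rfl, ?_⟩ <;> linarith
  let YY : T → Set (ℝ × ℝ) := fun τ => K τ ∪ ⋃ σ ∈ {σ | I τ σ}, L σ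
  have hYYc : ∀ τ p, p ∈ cells N (YY τ) → p ∈ cells N (K τ) ∨ ∃ σ, I τ σ ∧ p ∈ cells N (L σ) := by
    rintro τ p ⟨x, hx | hx, hxp⟩
    · exact Or.inl ⟨x, hx, hxp⟩
    · obtain ⟨σ, hσ, hxσ⟩ := Set.mem_iUnion₂.1 hx
      exact Or.inr ⟨σ, hσ, x, hxσ, hxp⟩
  have hYYsub : ∀ τ p, p ∈ cells N (YY τ) → cell N p ⊆ Y τ := by
    intro τ p hp
    rcases hYYc τ p hp with h | ⟨σ, hσ, h⟩
    · exact hE2 τ p h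
    · exact (hE1 σ p h).trans (hXY τ σ hσ)
  have hDd : ∀ σ σ' p, p ∈ cells N (L σ) → p ∈ cells N (L σ') → σ = σ' := by
    intro σ σ' p h h'
    obtain ⟨x, hx⟩ := hcellne p
    exact hXd σ σ' x (hE1 σ p h hx) (hE1 σ' p h' hx)
  apply voronoi I (fun σ => cells N (L σ)) (fun τ => cells N (YY τ))
  · intro σ
    obtain ⟨p, hp⟩ := exists_cell N (q σ)
    exact ⟨p, q σ, hLq σ, hp⟩
  · exact fun σ => cells_finite hN (hLcomp σ)
  · exact fun σ => cells_conn N (hLconn σ)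
  · exact hDd
  · exact fun τ => cells_finite hN ((hKcomp τ).union ((Set.toFinite _).isCompact_biUnion
      fun σ _ => hLcomp σ))
  · intro τ
    apply cells_conn N
    by_cases hex : ∃ σ0, I τ σ0
    · obtain ⟨σ0, h0⟩ := hex
      apply isPreconnected_of_forall (q σ0)
      rintro y (hy | hy)
      · exact ⟨K τ, Set.subset_union_left, hKq τ σ0 h0, hy, hKconn τ⟩
      · obtain ⟨σ, hσ, hyσ⟩ := Set.mem_iUnion₂.1 hy
        refine ⟨K τ ∪ L σ, ?_, Or.inl (hKq τ σ0 h0), Or.inr hyσ,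
          IsPreconnected.union (q σ) (hKq τ σ hσ) (hLq σ) (hKconn τ) (hLconn σ)⟩
        apply Set.union_subset_union_right
        intro z hz
        exact Set.mem_biUnion hσ hz
    · have : YY τ = K τ := by
        apply Set.Subset.antisymm _ Set.subset_union_left
        rintro y (hy | hy)
        · exact hy
        · obtain ⟨σ, hσ, hyσ⟩ := Set.mem_iUnion₂.1 hy
          exact absurd ⟨σ, hσ⟩ hex
      rw [this]
      exact hKconn τ
  · rintro τ σ hσ p ⟨x, hx, hxp⟩
    exact ⟨x, Or.inr (Set.mem_biUnion (show σ ∈ {σ | I τ σ} from hσ) hx), hxp⟩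
  · intro τ σ p hp hpσ
    obtain ⟨x, hx⟩ := hcellne p
    exact hI τ σ x (hYYsub τ p hp hx) (hE1 σ p hpσ hx)
  · intro τ τ' p hne hp hp'
    obtain ⟨x, hx⟩ := hcellne p
    have hsx : ∀ σ, p ∈ cells N (L σ) → I τ σ ∧ I τ' σ ∧ p ∈ cells N (L σ) := fun σ h =>
      ⟨hI _ _ x (hYYsub τ p hp hx) (hE1 σ p h hx), hI _ _ x (hYYsub τ' p hp' hx) (hE1 σ p h hx), h⟩
    rcases hYYc τ p hp with h | ⟨σ, hσ, h⟩
    · rcases hYYc τ' p hp' with h' | ⟨σ, hσ, h'⟩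
      · exact hE3 (τ, τ') hne p h h'
      · exact ⟨σ, hsx σ h'⟩
    · exact ⟨σ, hsx σ h⟩

end PUB

namespace PUB
open scoped Classical

theorem acyclic_no_tri {V : Type} {F : SimpleGraph V} (h : F.IsAcyclic) {x y w : V}
    (hxy : F.Adj x y) (hxw : F.Adj x w) (hyw : F.Adj y w) : False := by
  have h1 : (SimpleGraph.Walk.cons hxy SimpleGraph.Walk.nil).IsPath := by
    simp [hxy.ne]
  have h2 : (SimpleGraph.Walk.cons hxw (SimpleGraph.Walk.cons hyw.symm SimpleGraph.Walk.nil)).IsPath := by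
    simp [hxy.ne, hxw.ne, hyw.ne.symm]
  have h0 := h.subsingleton_path x y
  have h3 : (⟨_, h1⟩ : F.Path x y) = ⟨_, h2⟩ := Subsingleton.elim _ _
  have h4 := congrArg (fun p : F.Path x y => p.1.length) h3
  simp at h4

theorem exists_forest {V : Type} [Finite V] (G : SimpleGraph V)
    (hG : ∀ a b, G.Reachable a b) :
    ∃ F ≤ G, F.IsAcyclic ∧ Nat.card F.edgeSet = Nat.card V - 1 := by
  have := Fintype.ofFinite V
  by_cases hV : Nonempty V
  · have hc : G.Connected := ⟨hG⟩
    obtain ⟨F, hF, hT⟩ := hc.exists_isTree_le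
    refine ⟨F, hF, hT.isAcyclic, ?_⟩
    have := hT.card_edgeFinset
    rw [Nat.card_eq_fintype_card, Nat.card_eq_fintype_card, ← this]
    simp [SimpleGraph.edgeFinset_card]
  · have := not_nonempty_iff.1 hV
    refine ⟨⊥, bot_le, SimpleGraph.isAcyclic_bot, ?_⟩
    simp

theorem inter_eq_of {n k : ℕ} {a b τ : Finset (Fin n)} (ha : a.card = k + 1) (hb : b.card = k + 1)
    (hab : a ≠ b) (h1 : τ ⊆ a) (h2 : τ ⊆ b) (hτ : τ.card = k) : τ = a ∩ b := by
  apply Finset.eq_of_subset_of_card_le (Finset.subset_inter h1 h2)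
  by_contra hlt
  push Not at hlt
  have h3 : a ∩ b = a := Finset.eq_of_subset_of_card_le Finset.inter_subset_left (by omega)
  have h4 : a ∩ b = b := Finset.eq_of_subset_of_card_le Finset.inter_subset_right (by omega)
  exact hab (h3.symm.trans h4)

theorem union_card_of {n k : ℕ} {a b : Finset (Fin n)} (ha : a.card = k + 1) (hb : b.card = k + 1)
    (hab : (a ∩ b).card = k) : (a ∪ b).card = k + 2 := by
  have := Finset.card_union_add_card_inter a b
  omega

theorem tri_sets {n k : ℕ} {x y w : Finset (Fin n)} (hx : x.card = k + 1) (hy : y.card = k + 1)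
    (hw : w.card = k + 1) (hxy : (x ∩ y).card = k) (hxw : (x ∩ w).card = k)
    (hyw : (y ∩ w).card = k) :
    (x ∪ y = x ∪ w ∧ x ∪ y = y ∪ w) ∨ (x ∩ y = x ∩ w ∧ x ∩ y = y ∩ w) := by
  by_cases h : w ⊆ x ∪ y
  · left
    have c1 := union_card_of hx hy hxy
    have c2 := union_card_of hx hw hxw
    have c3 := union_card_of hy hw hyw
    constructor
    · exact (Finset.eq_of_subset_of_card_le
        (Finset.union_subset Finset.subset_union_left h) (by omega)).symm
    · exact (Finset.eq_of_subset_of_card_le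
        (Finset.union_subset Finset.subset_union_right h) (by omega)).symm
  · right
    obtain ⟨z, hzw, hz⟩ := Finset.not_subset.1 h
    simp only [Finset.mem_union, not_or] at hz
    have hc : (w.erase z).card = k := by rw [Finset.card_erase_of_mem hzw, hw]; rfl
    have e1 : x ∩ w = w.erase z := by
      apply Finset.eq_of_subset_of_card_le _ (by omega)
      intro a ha
      rw [Finset.mem_inter] at ha
      rw [Finset.mem_erase]
      exact ⟨fun h => hz.1 (h ▸ ha.1), ha.2⟩
    have e2 : y ∩ w = w.erase z := by
      apply Finset.eq_of_subset_of_card_le _ (by omega)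
      intro a ha
      rw [Finset.mem_inter] at ha
      rw [Finset.mem_erase]
      exact ⟨fun h => hz.2 (h ▸ ha.1), ha.2⟩
    have e3 : w.erase z = x ∩ y := by
      apply Finset.eq_of_subset_of_card_le _ (by omega)
      intro a ha
      rw [Finset.mem_inter]
      exact ⟨(Finset.mem_inter.1 (e1 ▸ ha)).1, (Finset.mem_inter.1 (e2 ▸ ha)).1⟩
    rw [e1, e2, e3]
    exact ⟨rfl, rfl⟩

theorem comb {n k : ℕ} (hk : 1 ≤ k) (S T : Finset (Finset (Fin n)))
    (hS : ∀ σ ∈ S, σ.card = k + 1) (hT : ∀ τ ∈ T, τ.card = k)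
    (B : S → Finset (ℤ × ℤ)) (hBne : ∀ σ, (B σ).Nonempty)
    (hBc : ∀ σ, GConn (B σ : Set (ℤ × ℤ))) (hBd : ∀ σ σ' p, p ∈ B σ → p ∈ B σ' → σ = σ')
    (hconn : ∀ (τ : T) (σ σ' : S), τ.1 ⊆ σ.1 → τ.1 ⊆ σ'.1 → Relation.ReflTransGen
        (fun a b : S => τ.1 ⊆ a.1 ∧ τ.1 ⊆ b.1 ∧ ∃ p ∈ B a, ∃ q ∈ B b, gadj p q) σ σ') :
    (4 * k + 1) * (∑ τ ∈ T, ((S.filter (fun σ => τ ⊆ σ)).card - 1)) ≤ 12 * k * S.card := by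
  let V : T → Type := fun τ => {σ : S // τ.1 ⊆ σ.1}
  let G : (τ : T) → SimpleGraph (V τ) := fun τ =>
    { Adj := fun a b => a ≠ b ∧ ∃ p ∈ B a.1, ∃ q ∈ B b.1, gadj p q
      symm := ⟨fun a b h => ⟨h.1.symm, by
        obtain ⟨p, hp, q, hq, hpq⟩ := h.2
        exact ⟨q, hq, p, hp, gadj_symm hpq⟩⟩⟩
      loopless := ⟨fun a h => h.1 rfl⟩ }
  have hG : ∀ τ (a b : V τ), (G τ).Reachable a b := by
    rintro τ ⟨a, ha⟩ ⟨b, hb⟩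
    have hab := hconn τ a b ha hb
    induction hab with
    | refl => exact SimpleGraph.Reachable.refl _
    | @tail b c _ hbc ih =>
      refine (ih hbc.1).trans ?_
      by_cases hne : b = c
      · subst hne; exact SimpleGraph.Reachable.refl _
      · apply SimpleGraph.Adj.reachable
        exact ⟨fun h => hne (congrArg Subtype.val h), hbc.2.2⟩
  choose F hFG hFa hFc using fun τ => exists_forest (G τ) (hG τ)
  let E : Type := Σ τ : T, (F τ).edgeSet
  have hE : Fintype.card E = ∑ τ ∈ T, ((S.filter (fun σ => τ ⊆ σ)).card - 1) := by
    rw [Fintype.card_sigma, ← Finset.sum_coe_sort T]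
    apply Finset.sum_congr rfl
    intro τ _
    rw [← Nat.card_eq_fintype_card, hFc τ]
    congr 1
    rw [Nat.card_eq_fintype_card, Fintype.card_subtype, ← Finset.card_map (Function.Embedding.subtype _)]
    congr 1
    ext σ
    simp [and_comm]
  have hor : ∀ e : E, ∃ (a b : V e.1) (g : GE), e.2.1 = s(a, b) ∧ g.1 ∈ B a.1 ∧ tgt g ∈ B b.1 := by
    rintro ⟨τ, ⟨e, he⟩⟩
    induction e using Sym2.ind with
    | _ a b =>
      obtain ⟨-, p, hp, q, hq, g, hg⟩ := hFG τ ((F τ).mem_edgeSet.1 he)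
      rcases hg with ⟨rfl, rfl⟩ | ⟨rfl, rfl⟩
      · exact ⟨a, b, g, rfl, hp, hq⟩
      · exact ⟨b, a, g, Sym2.eq_swap, hq, hp⟩
  choose s' t' g hst hs ht using hor
  let s : E → S := fun e => (s' e).1
  let t : E → S := fun e => (t' e).1
  let R : T → S → S → Prop := fun τ a b => ∃ (ha : τ.1 ⊆ a.1) (hb : τ.1 ⊆ b.1),
    (F τ).Adj ⟨a, ha⟩ ⟨b, hb⟩
  have hRsymm : ∀ τ a b, R τ a b → R τ b a := fun τ a b ⟨ha, hb, h⟩ => ⟨hb, ha, h.symm⟩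
  have hR : ∀ e, R e.1 (s e) (t e) := by
    intro e
    refine ⟨(s' e).2, (t' e).2, ?_⟩
    have := e.2.2
    rw [hst e] at this
    exact this
  have hR' : ∀ e x y, s(s e, t e) = s(x, y) → R e.1 x y := by
    intro e x y h
    rcases Sym2.eq_iff.1 h with ⟨h1, h2⟩ | ⟨h1, h2⟩
    · rw [← h1, ← h2]; exact hR e
    · rw [← h1, ← h2]; exact hRsymm _ _ _ (hR e)
  have hRne : ∀ τ a b, R τ a b → a ≠ b := by
    rintro τ a b ⟨ha, hb, h⟩ rfl
    exact h.ne rfl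
  have hRi : ∀ (τ : T) (a b : S), R τ a b → τ.1 = a.1 ∩ b.1 := by
    rintro τ a b h
    exact inter_eq_of (hS _ a.2) (hS _ b.2) (fun h' => hRne _ _ _ h (Subtype.ext h')) h.1 h.2.1
      (hT _ τ.2)
  have hne : ∀ e, s e ≠ t e := fun e => hRne _ _ _ (hR e)
  have hmap : ∀ e : E, e.2.1.map Subtype.val = s(s e, t e) := by
    intro e
    rw [hst e]; rfl
  have hEext : ∀ e e' : E, e.1 = e'.1 → e.2.1.map Subtype.val = e'.2.1.map Subtype.val → e = e' := by
    rintro ⟨τ, e⟩ ⟨τ', e'⟩ (rfl : τ = τ') h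
    congr 1
    exact Subtype.ext (Sym2.map.injective Subtype.val_injective h)
  have hinj : ∀ e e', s(s e, t e) = s(s e', t e') → e = e' := by
    intro e e' h
    apply hEext
    · apply Subtype.ext
      rw [hRi _ _ _ (hR e'), hRi _ _ _ (hR' e _ _ h)]
    · rw [hmap, hmap, h]
  let lab : E → Finset (Fin n) := fun e => (s e).1 ∪ (t e).1
  have hlabe : ∀ e x y, s(s e, t e) = s(x, y) → lab e = x.1 ∪ y.1 := by
    intro e x y h
    rcases Sym2.eq_iff.1 h with ⟨h1, h2⟩ | ⟨h1, h2⟩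
    · rw [← h1, ← h2]
    · rw [← h1, ← h2, Finset.union_comm]
  rw [← hE, ← Fintype.card_coe S]
  have htri : ∀ e₁ e₂ e₃, IsTri s t e₁ e₂ e₃ → lab e₁ = lab e₂ ∧ lab e₁ = lab e₃ := by
    rintro e₁ e₂ e₃ ⟨x, y, w, hxy, hxw, hyw, h1, h2, h3⟩
    have r1 := hR' _ _ _ h1
    have r2 := hR' _ _ _ h2
    have r3 := hR' _ _ _ h3
    have i1 := hRi _ _ _ r1
    have i2 := hRi _ _ _ r2
    have i3 := hRi _ _ _ r3
    rw [hlabe _ _ _ h1, hlabe _ _ _ h2, hlabe _ _ _ h3]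
    rcases tri_sets (hS _ x.2) (hS _ y.2) (hS _ w.2) (i1 ▸ hT _ e₁.1.2) (i2 ▸ hT _ e₂.1.2)
      (i3 ▸ hT _ e₃.1.2) with h | ⟨j1, j2⟩
    · exact h
    · exfalso
      have k2 : e₂.1 = e₁.1 := Subtype.ext (by rw [i1, i2, j1])
      have k3 : e₃.1 = e₁.1 := Subtype.ext (by rw [i1, i3, j2])
      rw [k2] at r2
      rw [k3] at r3
      obtain ⟨_, _, a1⟩ := r1
      obtain ⟨_, _, a2⟩ := r2
      obtain ⟨_, _, a3⟩ := r3
      exact acyclic_no_tri (hFa e₁.1) a1 a2 a3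
  have hdual : HasDual s t := grid_dual hne hinj B hBne hBc hBd g hs ht
  refine main_count hne hinj hdual lab htri k hk ?_
  intro U
  by_cases hU : ∃ e, lab e = U
  swap
  · refine (Finset.card_eq_zero.2 ?_).le.trans (Nat.zero_le _)
    refine Finset.eq_empty_of_forall_notMem fun e he => hU ⟨e, ?_⟩
    simpa using he
  have hUc : U.card = k + 2 := by
    obtain ⟨e, rfl⟩ := hU
    apply union_card_of (hS _ (s e).2) (hS _ (t e).2)
    rw [← hRi _ _ _ (hR e)]
    exact hT _ e.1.2
  let V' : Type := {σ : S // σ.1 ⊆ U}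
  let E' : Type := {e : E // lab e = U}
  let s1 : E' → V' := fun e => ⟨s e.1, by
    exact Finset.subset_union_left.trans (show lab e.1 ≤ U from le_of_eq e.2)⟩
  let t1 : E' → V' := fun e => ⟨t e.1, by
    exact Finset.subset_union_right.trans (show lab e.1 ≤ U from le_of_eq e.2)⟩
  have hne1 : ∀ e, s1 e ≠ t1 e := fun e h => hne e.1 (congrArg (fun v : V' => v.1) h)
  have hinj1 : ∀ e e', s(s1 e, t1 e) = s(s1 e', t1 e') → e = e' := by
    intro e e' h
    apply Subtype.ext
    apply hinj
    exact congrArg (Sym2.map Subtype.val) h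
  have hd1 : HasDual s1 t1 := grid_dual hne1 hinj1 (fun v => B v.1) (fun v => hBne v.1)
    (fun v => hBc v.1) (fun u v p hu hv => Subtype.ext (hBd _ _ p hu hv)) (fun e => g e.1)
    (fun e => hs e.1) (fun e => ht e.1)
  have hV' : Fintype.card V' ≤ k + 2 := by
    have : Fintype.card V' ≤ Fintype.card (Finset.powersetCard (k + 1) U) := by
      apply Fintype.card_le_of_injective (fun v : V' => (⟨v.1.1, Finset.mem_powersetCard.2
        ⟨v.2, hS _ v.1.2⟩⟩ : Finset.powersetCard (k + 1) U))
      intro v v' h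
      apply Subtype.ext
      apply Subtype.ext
      exact congrArg (fun v : Finset.powersetCard (k + 1) U => v.1) h
    rw [Fintype.card_coe, Finset.card_powersetCard, hUc] at this
    have h2 : (k + 2).choose (k + 1) = k + 2 := Nat.choose_succ_self_right (k + 1)
    omega
  have := planar_bound hne1 hinj1 hd1 k hk hV'
  rw [Fintype.card_subtype] at this
  convert this

end PUB

namespace PUB
open scoped Classical

theorem count {n k : ℕ} (hk : 1 ≤ k) (SA S T IA : Finset (Finset (Fin n)))
    (hSA : ∀ σ ∈ SA, σ.card = k + 1) (hS : S ⊆ SA)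
    (hIA : ∀ σ ∈ SA, ∀ τ ⊆ σ, τ.card = k → τ ∈ IA)
    (hd : ∀ τ ∈ IA, τ ∉ T → (SA.filter (fun σ => τ ⊆ σ)).card ≤ 1)
    (hp : ∀ σ ∈ SA, σ ∉ S → ∀ τ ∈ T, ∀ τ' ∈ T, τ ⊆ σ → τ' ⊆ σ → τ = τ')
    (hc : (4 * k + 1) * (∑ τ ∈ T, ((S.filter (fun σ => τ ⊆ σ)).card - 1)) ≤ 12 * k * S.card) :
    (4 * k + 1) * ((k + 1) * SA.card) ≤ (4 * k + 1) * IA.card + 12 * k * SA.card := by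
  have h1 : (k + 1) * SA.card ≤ ∑ τ ∈ IA, (SA.filter (fun σ => τ ⊆ σ)).card := by
    have := Finset.sum_card_bipartiteAbove_eq_sum_card_bipartiteBelow (s := IA) (t := SA)
      (fun τ σ : Finset (Fin n) => τ ⊆ σ)
    unfold Finset.bipartiteAbove Finset.bipartiteBelow at this
    rw [this, mul_comm, ← smul_eq_mul]
    apply Finset.card_nsmul_le_sum
    intro σ hσ
    have e : (Finset.powersetCard k σ).card = k + 1 := by
      rw [Finset.card_powersetCard, hSA σ hσ]
      exact Nat.choose_succ_self_right k
    rw [← e]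
    apply Finset.card_le_card
    intro τ hτ
    rw [Finset.mem_powersetCard] at hτ
    rw [Finset.mem_filter]
    exact ⟨hIA σ hσ τ hτ.1 hτ.2, hτ.1⟩
  have h2 : ∑ τ ∈ IA, (SA.filter (fun σ => τ ⊆ σ)).card ≤ IA.card +
      ∑ τ ∈ T, (((S.filter (fun σ => τ ⊆ σ)).card - 1) +
        ((SA \ S).filter (fun σ => τ ⊆ σ)).card) := by
    let f : Finset (Fin n) → ℕ := fun τ => (((S.filter (fun σ => τ ⊆ σ)).card - 1) +
        ((SA \ S).filter (fun σ => τ ⊆ σ)).card)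
    have a1 : ∀ τ ∈ IA, (SA.filter (fun σ => τ ⊆ σ)).card ≤ 1 + (if τ ∈ T then f τ else 0) := by
      intro τ hτ
      by_cases hT : τ ∈ T
      · rw [if_pos hT]
        have : (SA.filter (fun σ => τ ⊆ σ)).card = (S.filter (fun σ => τ ⊆ σ)).card +
            ((SA \ S).filter (fun σ => τ ⊆ σ)).card := by
          rw [← Finset.card_union_of_disjoint
            (Finset.disjoint_filter_filter Finset.disjoint_sdiff), ← Finset.filter_union,
            Finset.union_sdiff_of_subset hS]
        simp only [f]
        omega
      · rw [if_neg hT]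
        exact hd τ hτ hT
    refine (Finset.sum_le_sum a1).trans ?_
    rw [Finset.sum_add_distrib, Finset.sum_const, smul_eq_mul, mul_one]
    apply Nat.add_le_add_left
    rw [← Finset.sum_filter]
    apply Finset.sum_le_sum_of_subset
    intro τ hτ
    exact (Finset.mem_filter.1 hτ).2
  have h3 : ∑ τ ∈ T, ((SA \ S).filter (fun σ => τ ⊆ σ)).card ≤ (SA \ S).card := by
    have := Finset.sum_card_bipartiteAbove_eq_sum_card_bipartiteBelow (s := T) (t := SA \ S)
      (fun τ σ : Finset (Fin n) => τ ⊆ σ)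
    unfold Finset.bipartiteAbove Finset.bipartiteBelow at this
    rw [this]
    have := Finset.sum_le_card_nsmul (SA \ S) (fun σ => (T.filter (fun τ => τ ⊆ σ)).card) 1 (by
      intro σ hσ
      rw [Finset.mem_sdiff] at hσ
      apply Finset.card_le_one.2
      intro τ hτ τ' hτ'
      rw [Finset.mem_filter] at hτ hτ'
      exact hp σ hσ.1 hσ.2 τ hτ.1 τ' hτ'.1 hτ.2 hτ'.2)
    simpa using this
  rw [Finset.sum_add_distrib] at h2
  have h4 : (SA \ S).card + S.card = SA.card := Finset.card_sdiff_add_card_eq_card hS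
  set Q := ∑ τ ∈ T, ((S.filter (fun σ => τ ⊆ σ)).card - 1)
  have h5 : (k + 1) * SA.card ≤ IA.card + Q + (SA \ S).card := by omega
  calc (4 * k + 1) * ((k + 1) * SA.card) ≤ (4 * k + 1) * (IA.card + Q + (SA \ S).card) :=
        Nat.mul_le_mul_left _ h5
    _ = (4 * k + 1) * IA.card + (4 * k + 1) * Q + (4 * k + 1) * (SA \ S).card := by ring
    _ ≤ (4 * k + 1) * IA.card + 12 * k * S.card + 12 * k * (SA \ S).card := by
        have : (4 * k + 1) * (SA \ S).card ≤ 12 * k * (SA \ S).card :=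
          Nat.mul_le_mul_right _ (by omega)
        omega
    _ = (4 * k + 1) * IA.card + 12 * k * SA.card := by rw [← h4]; ring

theorem family {α : Type*} {n : ℕ} (A : Fin n → Set α) {σ : Finset (Fin n)} {x : α} :
    x ∈ (⋂ i ∈ σ, A i) ↔ ∀ i ∈ σ, x ∈ A i := by simp

/-- the plane -/
noncomputable def planeHomeo : EuclideanSpace ℝ (Fin 2) ≃ₜ ℝ × ℝ :=
  (EuclideanSpace.equiv (Fin 2) ℝ).toHomeomorph.trans Homeomorph.finTwoArrow

theorem main_nat (k n : ℕ) (hk : 1 ≤ k)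
    (A : Fin n → Set (EuclideanSpace ℝ (Fin 2)))
    (h1 : ∀ σ : Finset (Fin n), σ.card = k + 2 → ¬ (⋂ i ∈ σ, A i).Nonempty)
    (h2 : ∀ σ : Finset (Fin n), σ.card = k ∨ σ.card = k + 1 →
      (⋂ i ∈ σ, A i) = ∅ ∨ (∃ p, (⋂ i ∈ σ, A i) = {p}) ∨
        (IsOpen (⋂ i ∈ σ, A i) ∧ IsPathConnected (⋂ i ∈ σ, A i)))
    (SA IA : Finset (Finset (Fin n)))
    (hSA : ∀ σ, σ ∈ SA ↔ σ.card = k + 1 ∧ (⋂ i ∈ σ, A i).Nonempty)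
    (hIA : ∀ τ, τ ∈ IA ↔ τ.card = k ∧ (⋂ i ∈ τ, A i).Nonempty ∧
      ∃ σ : Finset (Fin n), τ ⊂ σ ∧ σ.card = k + 1 ∧ (⋂ i ∈ σ, A i).Nonempty) :
    (4 * k + 1) * ((k + 1) * SA.card) ≤ (4 * k + 1) * IA.card + 12 * k * SA.card := by
  let M : Finset (Fin n) → Set (EuclideanSpace ℝ (Fin 2)) := fun σ => ⋂ i ∈ σ, A i
  have hM : ∀ σ x, x ∈ M σ ↔ ∀ i ∈ σ, x ∈ A i := fun σ x => family A
  have hMmono : ∀ σ τ, τ ⊆ σ → M σ ⊆ M τ := fun σ τ h x hx =>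
    (hM _ _).2 fun i hi => (hM _ _).1 hx i (h hi)
  have hMunion : ∀ σ τ x, x ∈ M σ → x ∈ M τ → x ∈ M (σ ∪ τ) := by
    intro σ τ x h h'
    rw [hM] at h h' ⊢
    intro i hi
    rcases Finset.mem_union.1 hi with hi | hi
    · exact h i hi
    · exact h' i hi
  have hbig : ∀ σ x, x ∈ M σ → σ.card ≤ k + 1 := by
    intro σ x hx
    by_contra hlt
    push Not at hlt
    obtain ⟨ρ, hρ, hc⟩ := Finset.exists_subset_card_eq (show k + 2 ≤ σ.card by omega)
    exact h1 ρ hc ⟨x, hMmono _ _ hρ hx⟩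
  have hpc : ∀ σ : Finset (Fin n), σ.card = k ∨ σ.card = k + 1 → (M σ).Nonempty →
      IsPathConnected (M σ) := by
    intro σ hσ hne
    rcases h2 σ hσ with h | ⟨p, h⟩ | h
    · exact absurd h hne.ne_empty
    · change M σ = {p} at h
      rw [h]; exact isPathConnected_singleton p
    · exact h.2
  have hsing : ∀ σ : Finset (Fin n), σ.card = k ∨ σ.card = k + 1 → (M σ).Nonempty →
      ¬ IsOpen (M σ) → ∃ p, M σ = {p} := by
    intro σ hσ hne ho
    rcases h2 σ hσ with h | ⟨p, h⟩ | h
    · exact absurd h hne.ne_empty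
    · exact ⟨p, h⟩
    · exact absurd h.1 ho
  have hdis : ∀ σ σ' : Finset (Fin n), σ.card = k + 1 → σ'.card = k + 1 → ∀ x, x ∈ M σ →
      x ∈ M σ' → σ = σ' := by
    intro σ σ' hσ hσ' x hx hx'
    have := hbig _ _ (hMunion _ _ _ hx hx')
    have e1 : σ = σ ∪ σ' := Finset.eq_of_subset_of_card_le Finset.subset_union_left (by omega)
    have e2 : σ' = σ ∪ σ' := Finset.eq_of_subset_of_card_le Finset.subset_union_right (by omega)
    rw [e1, ← e2]
  have hpair : ∀ τ τ' : Finset (Fin n), τ.card = k → τ'.card = k → τ ≠ τ' →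
      k + 1 ≤ (τ ∪ τ').card := by
    intro τ τ' hτ hτ' hne
    by_contra hlt
    push Not at hlt
    have e1 : τ = τ ∪ τ' := Finset.eq_of_subset_of_card_le Finset.subset_union_left (by omega)
    have e2 : τ' = τ ∪ τ' := Finset.eq_of_subset_of_card_le Finset.subset_union_right (by omega)
    exact hne (e1.trans e2.symm)
  have hMinter : ∀ σ τ, M (σ ∪ τ) = M σ ∩ M τ := by
    intro σ τ
    apply Set.Subset.antisymm
    · exact fun x hx => ⟨hMmono _ _ Finset.subset_union_left hx,
        hMmono _ _ Finset.subset_union_right hx⟩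
    · exact fun x hx => hMunion _ _ _ hx.1 hx.2
  let S : Finset (Finset (Fin n)) := SA.filter (fun σ => IsOpen (M σ))
  let T : Finset (Finset (Fin n)) := Finset.univ.filter
    (fun τ => τ.card = k ∧ (M τ).Nonempty ∧ IsOpen (M τ))
  have hSm : ∀ σ, σ ∈ S ↔ σ.card = k + 1 ∧ (M σ).Nonempty ∧ IsOpen (M σ) := by
    intro σ
    simp only [S, Finset.mem_filter, hSA, and_assoc]
    rfl
  have hTm : ∀ τ, τ ∈ T ↔ τ.card = k ∧ (M τ).Nonempty ∧ IsOpen (M τ) := by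
    intro τ
    simp only [T, Finset.mem_filter, Finset.mem_univ, true_and]
  have hun : ∀ τ τ' σ : Finset (Fin n), τ.card = k → τ'.card = k → σ.card = k + 1 → τ ≠ τ' →
      τ ⊆ σ → τ' ⊆ σ → τ ∪ τ' = σ := by
    intro τ τ' σ c c' cσ hne h h'
    apply Finset.eq_of_subset_of_card_le (Finset.union_subset h h')
    have := hpair τ τ' c c' hne
    omega
  apply count hk SA S T IA (fun σ hσ => ((hSA σ).1 hσ).1) (Finset.filter_subset _ _)
  · intro σ hσ τ hτ hc
    have h := (hSA σ).1 hσ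
    refine (hIA τ).2 ⟨hc, h.2.mono (hMmono _ _ hτ), σ, ?_, h⟩
    refine Finset.ssubset_iff_subset_ne.2 ⟨hτ, ?_⟩
    rintro rfl
    omega
  · intro τ hτ hτT
    have h := (hIA τ).1 hτ
    have hno : ¬ IsOpen (M τ) := fun ho => hτT ((hTm τ).2 ⟨h.1, h.2.1, ho⟩)
    obtain ⟨p, hp⟩ := hsing τ (Or.inl h.1) h.2.1 hno
    apply Finset.card_le_one.2
    have key : ∀ σ ∈ SA, τ ⊆ σ → p ∈ M σ := by
      intro σ hσ hτσ
      obtain ⟨x, hx⟩ := ((hSA σ).1 hσ).2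
      have hx2 := hMmono _ _ hτσ hx
      rw [hp] at hx2
      have : x = p := hx2
      rw [← this]; exact hx
    intro σ hσ σ' hσ'
    rw [Finset.mem_filter] at hσ hσ'
    exact hdis σ σ' ((hSA σ).1 hσ.1).1 ((hSA σ').1 hσ'.1).1 p (key σ hσ.1 hσ.2)
      (key σ' hσ'.1 hσ'.2)
  · intro σ hσ hσS τ hτ τ' hτ' h h'
    by_contra hne
    rw [hTm] at hτ hτ'
    have hs := (hSA σ).1 hσ
    apply hσS
    refine (hSm σ).2 ⟨hs.1, hs.2, ?_⟩
    rw [← hun τ τ' σ hτ.1 hτ'.1 hs.1 hne h h', hMinter]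
    exact hτ.2.2.inter hτ'.2.2
  · let φ := planeHomeo
    have hφ : ∀ σ x, x ∈ φ '' M σ ↔ φ.symm x ∈ M σ := by
      intro σ x
      constructor
      · rintro ⟨y, hy, rfl⟩
        simpa using hy
      · intro h
        exact ⟨_, h, by simp⟩
    obtain ⟨B, hB1, hB2, hB3, hB4⟩ := top_grid (S := S) (T := T) (fun τ σ => τ.1 ⊆ σ.1)
      (fun σ => φ '' M σ.1) (fun τ => φ '' M τ.1)
      (fun σ => φ.isOpenMap _ ((hSm _).1 σ.2).2.2)
      (fun σ => (hpc _ (Or.inr ((hSm _).1 σ.2).1) ((hSm _).1 σ.2).2.1).image φ.continuous)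
      (by
        intro σ σ' p hp hp'
        rw [hφ] at hp hp'
        exact Subtype.ext (hdis _ _ ((hSm _).1 σ.2).1 ((hSm _).1 σ'.2).1 _ hp hp'))
      (fun τ => φ.isOpenMap _ ((hTm _).1 τ.2).2.2)
      (fun τ => (hpc _ (Or.inl ((hTm _).1 τ.2).1) ((hTm _).1 τ.2).2.1).image φ.continuous)
      (fun τ σ h => Set.image_mono (hMmono _ _ h))
      (by
        intro τ σ p hp hp'
        rw [hφ] at hp hp'
        have := hbig _ _ (hMunion _ _ _ hp' hp)
        have e1 : σ.1 = σ.1 ∪ τ.1 := Finset.eq_of_subset_of_card_le Finset.subset_union_left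
          (by have := ((hSm _).1 σ.2).1; omega)
        rw [e1]
        exact Finset.subset_union_right)
      (by
        intro τ τ' p hne hp hp'
        rw [hφ] at hp hp'
        have hu := hMunion _ _ _ hp hp'
        have ht := (hTm _).1 τ.2
        have ht' := (hTm _).1 τ'.2
        have hc : (τ.1 ∪ τ'.1).card = k + 1 := le_antisymm (hbig _ _ hu)
          (hpair _ _ ht.1 ht'.1 fun h => hne (Subtype.ext h))
        refine ⟨⟨τ.1 ∪ τ'.1, (hSm _).2 ⟨hc, ⟨_, hu⟩, ?_⟩⟩, Finset.subset_union_left,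
          Finset.subset_union_right, ?_⟩
        · rw [hMinter]
          exact ht.2.2.inter ht'.2.2
        · exact (hφ _ _).2 hu)
      (by
        intro τ τ' σ σ' hne a b c d
        have ht := (hTm _).1 τ.2
        have ht' := (hTm _).1 τ'.2
        have hn : τ.1 ≠ τ'.1 := fun h => hne (Subtype.ext h)
        apply Subtype.ext
        rw [← hun _ _ _ ht.1 ht'.1 ((hSm _).1 σ.2).1 hn a b,
          ← hun _ _ _ ht.1 ht'.1 ((hSm _).1 σ'.2).1 hn c d])
    exact comb hk S T (fun σ hσ => ((hSm σ).1 hσ).1) (fun τ hτ => ((hTm τ).1 hτ).1) B hB1 hB2 hB3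
      hB4

end PUB

/-- **Theorem (main, b = 1).** Let `k ≥ 2` and let `𝒜 = {A_1, …, A_n}` be subsets of `ℝ²`
such that (i) `f_{k+1}(𝒜) = 0` and (ii) each `k`-wise and `(k+1)`-wise intersection is
empty, a single point, or both open and path-connected. Then
`f_k(𝒜) ≤ ((4k+1)/(4k²-7k+1)) · f_{k-1}^{ind}(𝒜)`. -/
theorem planar_upper_bound_path_connected (k n : ℕ) (hk : 2 ≤ k)
    (A : Fin n → Set (EuclideanSpace ℝ (Fin 2)))
    (h1 : fNum A (k + 1) = 0)
    (h2 : ∀ σ : Finset (Fin n), σ.card = k ∨ σ.card = k + 1 →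
      (⋂ i ∈ σ, A i) = ∅ ∨ (∃ p, (⋂ i ∈ σ, A i) = {p}) ∨
        (IsOpen (⋂ i ∈ σ, A i) ∧ IsPathConnected (⋂ i ∈ σ, A i))) :
    (fNum A k : ℝ) ≤ ((4 * k + 1 : ℝ) / (4 * (k : ℝ) ^ 2 - 7 * k + 1)) * fInd A (k - 1) := by
  obtain ⟨SA, hSA⟩ : ∃ SA : Finset (Finset (Fin n)), ∀ σ, σ ∈ SA ↔
      σ.card = k + 1 ∧ (⋂ i ∈ σ, A i).Nonempty := by
    classical
    exact ⟨Finset.univ.filter fun σ => σ.card = k + 1 ∧ (⋂ i ∈ σ, A i).Nonempty, by simp⟩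
  obtain ⟨IA, hIA⟩ : ∃ IA : Finset (Finset (Fin n)), ∀ τ, τ ∈ IA ↔
      τ.card = k ∧ (⋂ i ∈ τ, A i).Nonempty ∧
      ∃ σ : Finset (Fin n), τ ⊂ σ ∧ σ.card = k + 1 ∧ (⋂ i ∈ σ, A i).Nonempty := by
    classical
    exact ⟨Finset.univ.filter fun τ => τ.card = k ∧ (⋂ i ∈ τ, A i).Nonempty ∧
      ∃ σ : Finset (Fin n), τ ⊂ σ ∧ σ.card = k + 1 ∧ (⋂ i ∈ σ, A i).Nonempty, by simp⟩
  have hf : fNum A k = SA.card := by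
    unfold fNum
    rw [Nat.subtype_card SA hSA]
  have hg : fInd A (k - 1) = IA.card := by
    unfold fInd
    have e1 : k - 1 + 1 = k := by omega
    have e2 : k - 1 + 2 = k + 1 := by omega
    rw [e1, e2]
    rw [Nat.subtype_card IA hIA]
  have h1' : ∀ σ : Finset (Fin n), σ.card = k + 2 → ¬ (⋂ i ∈ σ, A i).Nonempty := by
    intro σ hσ hne
    unfold fNum at h1
    have : IsEmpty {σ : Finset (Fin n) // σ.card = k + 1 + 1 ∧ (⋂ i ∈ σ, A i).Nonempty} :=
      Finite.card_eq_zero_iff.1 h1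
    exact this.false ⟨σ, hσ, hne⟩
  have hmain := PUB.main_nat k n (by omega) A h1' h2 SA IA hSA hIA
  rw [hf, hg]
  have hk2 : (2 : ℝ) ≤ k := by exact_mod_cast hk
  have hpos : (0 : ℝ) < 4 * (k : ℝ) ^ 2 - 7 * k + 1 := by nlinarith
  have hr : (4 * (k : ℝ) + 1) * (((k : ℝ) + 1) * SA.card) ≤
      (4 * (k : ℝ) + 1) * IA.card + 12 * k * SA.card := by exact_mod_cast hmain
  rw [div_mul_eq_mul_div, le_div_iff₀ hpos]
  nlinarith
end
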